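/- arXiv:2306.06616 — 11 statements merged into one kernel-verified Lean document; each statement's English description precedes it below -/
import Mathlib

section
/- Let C be a triangulated category, ((S, T), (U, V)) a twin cotorsion pair on C, and W = T ∩ U. Let A →x B →y C →δ A[1] be a distinguished triangle in which x is W-monic and y is W-epic. If A and C belong to H = B⁺ ∩ B⁻, then B belongs to H. -/
open CategoryTheory CategoryTheory.Limits CategoryTheory.Pretriangulated

universe v u

variable (C : Type u) [Category.{v} C] [Preadditive C] [HasZeroObject C] [HasShift C ℤ]
  [∀ n : ℤ, (shiftFunctor C n).Additive] [Pretriangulated C]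

/-- A class of objects is closed under isomorphisms. -/
def ClosedUnderIso (D : Set C) : Prop := ∀ ⦃X Y : C⦄, (X ≅ Y) → X ∈ D → Y ∈ D

/-- A class of objects is closed under direct summands (retracts). -/
def ClosedUnderSummands (D : Set C) : Prop :=
  ∀ ⦃X Y : C⦄, Y ∈ D → (∃ (i : X ⟶ Y) (p : Y ⟶ X), i ≫ p = 𝟙 X) → X ∈ D

/-- A cotorsion pair `(U, V)` on a triangulated category: both classes are closed under
isomorphisms and direct summands, `Hom(U, V[1]) = 0`, and every object `B` admits a
distinguished triangle `V₀ → U₀ → B → V₀[1]` with `U₀ ∈ U`, `V₀ ∈ V`. -/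
def CotorsionPair (U V : Set C) : Prop :=
  ClosedUnderIso C U ∧ ClosedUnderSummands C U ∧
  ClosedUnderIso C V ∧ ClosedUnderSummands C V ∧
  (∀ ⦃X Y : C⦄, X ∈ U → Y ∈ V → ∀ f : X ⟶ Y⟦(1 : ℤ)⟧, f = 0) ∧
  (∀ B : C, ∃ (V₀ U₀ : C), V₀ ∈ V ∧ U₀ ∈ U ∧
    ∃ (x : V₀ ⟶ U₀) (y : U₀ ⟶ B) (δ : B ⟶ V₀⟦(1 : ℤ)⟧),
      Triangle.mk x y δ ∈ distTriang C)

/-- A twin cotorsion pair `((S, T), (U, V))`: two cotorsion pairs with `S ⊆ U`. -/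
def TwinCotorsionPair (S T U V : Set C) : Prop :=
  CotorsionPair C S T ∧ CotorsionPair C U V ∧ S ⊆ U

/-- `x : A ⟶ B` is `W`-monic: every morphism from `A` to an object of `W` factors
through `x`. -/
def WMonic (W : Set C) {A B : C} (x : A ⟶ B) : Prop :=
  ∀ ⦃W₀ : C⦄, W₀ ∈ W → ∀ g : A ⟶ W₀, ∃ h : B ⟶ W₀, x ≫ h = g

/-- `y : B ⟶ X` is `W`-epic: every morphism from an object of `W` to `X` factors
through `y`. -/
def WEpic (W : Set C) {B X : C} (y : B ⟶ X) : Prop :=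
  ∀ ⦃W₀ : C⦄, W₀ ∈ W → ∀ g : W₀ ⟶ X, ∃ h : W₀ ⟶ B, h ≫ y = g

/-- `B⁺`-type class: objects `X` admitting a distinguished triangle `V₀ → W₀ → X → V₀[1]`
with `V₀ ∈ V` and `W₀ ∈ W`. -/
def Bplus (V W : Set C) : Set C :=
  {X | ∃ (V₀ W₀ : C), V₀ ∈ V ∧ W₀ ∈ W ∧
    ∃ (f : V₀ ⟶ W₀) (g : W₀ ⟶ X) (δ : X ⟶ V₀⟦(1 : ℤ)⟧),
      Triangle.mk f g δ ∈ distTriang C}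

/-- `B⁻`-type class: objects `Y` admitting a distinguished triangle `Y → W₀ → S₀ → Y[1]`
with `W₀ ∈ W` and `S₀ ∈ S`. -/
def Bminus (S W : Set C) : Set C :=
  {Y | ∃ (W₀ S₀ : C), W₀ ∈ W ∧ S₀ ∈ S ∧
    ∃ (f : Y ⟶ W₀) (g : W₀ ⟶ S₀) (δ : S₀ ⟶ Y⟦(1 : ℤ)⟧),
      Triangle.mk f g δ ∈ distTriang C}

/-- The heart `H = B⁺ ∩ B⁻` of a twin cotorsion pair. -/
def Heart (S V W : Set C) : Set C := Bplus C V W ∩ Bminus C S W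

/-- A morphism factors through an object of the class `W`. -/
def FactorsThruClass (W : Set C) {X Y : C} (f : X ⟶ Y) : Prop :=
  ∃ (W₀ : C), W₀ ∈ W ∧ ∃ (g : X ⟶ W₀) (h : W₀ ⟶ Y), g ≫ h = f

/-- `x : A ⟶ B` is left almost split: any morphism out of `A` which is not a section
factors through `x`. -/
def LeftAlmostSplit {A B : C} (x : A ⟶ B) : Prop :=
  ∀ ⦃M : C⦄ (a : A ⟶ M), (¬ ∃ r : M ⟶ A, a ≫ r = 𝟙 A) → ∃ m : B ⟶ M, x ≫ m = a

/-- `y : B ⟶ X` is right almost split: any morphism into `X` which is not a retraction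
factors through `y`. -/
def RightAlmostSplit {B X : C} (y : B ⟶ X) : Prop :=
  ∀ ⦃N : C⦄ (c : N ⟶ X), (¬ ∃ s : X ⟶ N, s ≫ c = 𝟙 X) → ∃ n : N ⟶ B, n ≫ y = c

/-- An almost split triangle: a nonsplit distinguished triangle whose first morphism is
left almost split and whose second morphism is right almost split. -/
def IsAlmostSplitTriangle {A B X : C} (x : A ⟶ B) (y : B ⟶ X)
    (δ : X ⟶ A⟦(1 : ℤ)⟧) : Prop :=
  (Triangle.mk x y δ ∈ distTriang C) ∧ δ ≠ 0 ∧
    LeftAlmostSplit C x ∧ RightAlmostSplit C y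


variable {C}

lemma aux_ext {Y W₀ S₀ Z : C} {f : Y ⟶ W₀} {g : W₀ ⟶ S₀} {d : S₀ ⟶ Y⟦(1 : ℤ)⟧}
    (hT : Triangle.mk f g d ∈ distTriang C) (t : Y ⟶ Z)
    (h0 : ∀ k : S₀ ⟶ Z⟦(1 : ℤ)⟧, k = 0) : ∃ r : W₀ ⟶ Z, f ≫ r = t := by
  obtain ⟨q, hq⟩ : ∃ q : W₀⟦(1 : ℤ)⟧ ⟶ Z⟦(1 : ℤ)⟧, t⟦(1 : ℤ)⟧' = (-f⟦(1 : ℤ)⟧') ≫ q :=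
    Triangle.yoneda_exact₃ _ (rot_of_distTriang _ hT) (t⟦(1 : ℤ)⟧') (h0 _)
  obtain ⟨r, hr⟩ := (shiftFunctor C (1 : ℤ)).map_surjective q
  refine ⟨-r, (shiftFunctor C (1 : ℤ)).map_injective ?_⟩
  subst hr
  rw [hq]
  simp

lemma aux_U {U V : Set C} (h : CotorsionPair C U V) {Z : C}
    (hZ : ∀ V₁ ∈ V, ∀ f : Z ⟶ V₁⟦(1 : ℤ)⟧, f = 0) : Z ∈ U := by
  obtain ⟨-, hs, -, -, -, ht⟩ := h
  obtain ⟨V₀, U₀, hV, hU, a, b, c, hT⟩ := ht Z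
  obtain ⟨q, hq⟩ := Triangle.coyoneda_exact₃ _ hT (𝟙 Z)
    (by rw [hZ _ hV (Triangle.mk a b c).mor₃]; exact comp_zero)
  exact hs hU ⟨q, b, hq.symm⟩

lemma aux_T {S T : Set C} (h : CotorsionPair C S T) {Z : C}
    (hZ : ∀ S₁ ∈ S, ∀ f : S₁ ⟶ Z⟦(1 : ℤ)⟧, f = 0) : Z ∈ T := by
  obtain ⟨-, -, -, hs, -, ht⟩ := h
  obtain ⟨T₀, S₀, hT₀, hS₀, a, b, c, hT⟩ := ht (Z⟦(1 : ℤ)⟧)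
  obtain ⟨q, hq⟩ : ∃ q : T₀⟦(1 : ℤ)⟧ ⟶ Z⟦(1 : ℤ)⟧, 𝟙 (Z⟦(1 : ℤ)⟧) = c ≫ q :=
    Triangle.yoneda_exact₃ _ hT (𝟙 (Z⟦(1 : ℤ)⟧))
    (by rw [hZ _ hS₀ (Triangle.mk a b c).mor₂]; exact zero_comp)
  obtain ⟨r, hr⟩ := (shiftFunctor C (1 : ℤ)).map_surjective q
  obtain ⟨i, hi⟩ := (shiftFunctor C (1 : ℤ)).map_surjective c
  refine hs hT₀ ⟨i, r, (shiftFunctor C (1 : ℤ)).map_injective ?_⟩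
  rw [Functor.map_comp, hr, hi, CategoryTheory.Functor.map_id]
  exact hq.symm

lemma aux_left {S T : Set C} (h : CotorsionPair C S T) (B : C) :
    ∃ (T₀ S₀ : C), T₀ ∈ T ∧ S₀ ∈ S ∧ ∃ (x : B ⟶ T₀) (y : T₀ ⟶ S₀) (d : S₀ ⟶ B⟦(1 : ℤ)⟧),
      Triangle.mk x y d ∈ distTriang C := by
  obtain ⟨-, -, -, -, -, ht⟩ := h
  obtain ⟨T₀, S₀, hT₀, hS₀, a, b, c, hT⟩ := ht (B⟦(1 : ℤ)⟧)
  obtain ⟨i, hi⟩ := (shiftFunctor C (1 : ℤ)).map_surjective (-c)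
  refine ⟨T₀, S₀, hT₀, hS₀, i, a, b, ?_⟩
  rw [rotate_distinguished_triangle]
  have : (Triangle.mk i a b).rotate = Triangle.mk a b c := by
    change Triangle.mk a b (-(shiftFunctor C (1 : ℤ)).map i) = _
    rw [hi, neg_neg]
  rw [this]
  exact hT

variable (C)

/-- **Lemma 3.2.** Let `((S, T), (U, V))` be a twin cotorsion pair with `W = T ∩ U` and
let `A → B → X → A[1]` be a distinguished triangle with `x` `W`-monic and `y` `W`-epic.
If `A` and `X` belong to the heart `H = B⁺ ∩ B⁻`, then so does `B`. -/
theorem heart_stmt_4 {S T U V : Set C} (h : TwinCotorsionPair C S T U V)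
    {A B X : C} (x : A ⟶ B) (y : B ⟶ X) (δ : X ⟶ A⟦(1 : ℤ)⟧)
    (hdist : Triangle.mk x y δ ∈ distTriang C)
    (hx : WMonic C (T ∩ U) x) (hy : WEpic C (T ∩ U) y)
    (hA : A ∈ Heart C S V (T ∩ U)) (hX : X ∈ Heart C S V (T ∩ U)) :
    B ∈ Heart C S V (T ∩ U) := by
  obtain ⟨hST, hUV, hSU⟩ := h
  have oST := hST.2.2.2.2.1
  have oUV := hUV.2.2.2.2.1
  obtain ⟨⟨VA, WA, hVA, hWA, fA, gA, dA, tA⟩, ⟨WA', SA, hWA', hSA, fA', gA', dA', tA'⟩⟩ := hA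
  obtain ⟨⟨VX, WX, hVX, hWX, fX, gX, dX, tX⟩, ⟨WX', SX, hWX', hSX, fX', gX', dX', tX'⟩⟩ := hX
  constructor
  · obtain ⟨V₀, U₀, hV₀, hU₀, a, b, c, hT⟩ := hUV.2.2.2.2.2 B
    refine ⟨V₀, U₀, hV₀, ⟨aux_T hST ?_, hU₀⟩, a, b, c, hT⟩
    intro S₁ hS₁ f
    obtain ⟨p, hp⟩ : ∃ p : U₀ ⟶ WX, b ≫ y = p ≫ gX := Triangle.coyoneda_exact₃ _ tX (b ≫ y) (oUV hU₀ hVX _)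
    obtain ⟨k, hk⟩ : ∃ k : WX ⟶ B, k ≫ y = gX := hy hWX gX
    obtain ⟨q, hq⟩ : ∃ q : U₀ ⟶ A, b - p ≫ k = q ≫ x := Triangle.coyoneda_exact₂ _ hdist (b - p ≫ k) (by
      change (b - p ≫ k) ≫ y = 0
      rw [Preadditive.sub_comp, Category.assoc, hk, sub_eq_zero]
      exact hp)
    obtain ⟨r, hr⟩ : ∃ r : U₀ ⟶ WA, q = r ≫ gA := Triangle.coyoneda_exact₃ _ tA q (oUV hU₀ hVA _)
    have hb : b = p ≫ k + (r ≫ gA) ≫ x := by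
      rw [← sub_eq_iff_eq_add', hq, hr]
    have h1 : f ≫ b⟦(1 : ℤ)⟧' = 0 := by
      rw [hb, Functor.map_add, Functor.map_comp, Functor.map_comp, Functor.map_comp,
        Preadditive.comp_add, ← Category.assoc, ← Category.assoc, ← Category.assoc,
        oST hS₁ hWX.1 (f ≫ p⟦(1 : ℤ)⟧'), oST hS₁ hWA.1 (f ≫ r⟦(1 : ℤ)⟧')]
      simp
    obtain ⟨s, hs⟩ := Triangle.coyoneda_exact₁ _ (rot_of_distTriang _ hT) f h1
    rw [hs, oUV (hSU hS₁) hV₀ s]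
    exact zero_comp
  · obtain ⟨T₀, S₀, hT₀, hS₀, a, b, c, hT⟩ := aux_left hST B
    refine ⟨T₀, S₀, ⟨hT₀, aux_U hUV ?_⟩, hS₀, a, b, c, hT⟩
    intro V₁ hV₁ f
    obtain ⟨p, hp⟩ := aux_ext tA' (x ≫ a) (oST hSA hT₀)
    obtain ⟨k, hk⟩ : ∃ k : B ⟶ WA', x ≫ k = fA' := hx hWA' fA'
    obtain ⟨q, hq⟩ : ∃ q : X ⟶ T₀, a - k ≫ p = y ≫ q := Triangle.yoneda_exact₂ _ hdist (a - k ≫ p) (by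
      change x ≫ (a - k ≫ p) = 0
      rw [Preadditive.comp_sub, ← Category.assoc, hk, hp, sub_self])
    obtain ⟨r, hr⟩ := aux_ext tX' q (oST hSX hT₀)
    have ha : a = k ≫ p + y ≫ fX' ≫ r := by
      rw [← sub_eq_iff_eq_add', hq, hr]
    have h1 : a ≫ f = 0 := by
      rw [ha, Preadditive.add_comp, Category.assoc, Category.assoc, Category.assoc,
        oUV hWA'.2 hV₁ (p ≫ f), oUV hWX'.2 hV₁ (r ≫ f)]
      simp
    obtain ⟨s, hs⟩ := Triangle.yoneda_exact₂ _ hT f h1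
    rw [hs, oUV (hSU hS₀) hV₁ s]
    exact comp_zero
end

section
/- Let C be a triangulated category, ((S, T), (U, V)) a twin cotorsion pair on C, and W = T ∩ U. Let A →x B →y C →δ A[1] be a distinguished triangle with x W-monic and y W-epic, let f : A → D be any morphism, and let D →d E →e C →(δ ≫ f[1]) D[1] be any distinguished triangle whose connecting morphism is f[1] ∘ δ : C → D[1]. Then d is W-monic and e is W-epic. -/
open CategoryTheory CategoryTheory.Limits CategoryTheory.Pretriangulated

universe v u

variable (C : Type u) [Category.{v} C] [Preadditive C] [HasZeroObject C] [HasShift C ℤ]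
  [∀ n : ℤ, (shiftFunctor C n).Additive] [Pretriangulated C]

/-- **Proposition 3.4(1).** Let `((S, T), (U, V))` be a twin cotorsion pair with
`W = T ∩ U`. Given a distinguished triangle `A →x B →y X →δ A[1]` with `x` `W`-monic and
`y` `W`-epic, a morphism `f : A ⟶ D`, and a distinguished triangle
`D →d E →e X → D[1]` whose connecting morphism is `δ ≫ f[1]` (the pushforward `f_*δ`),
the morphism `d` is `W`-monic and `e` is `W`-epic. -/
theorem heart_stmt_5 {S T U V : Set C} (h : TwinCotorsionPair C S T U V)
    {A B X : C} (x : A ⟶ B) (y : B ⟶ X) (δ : X ⟶ A⟦(1 : ℤ)⟧)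
    (hdist : Triangle.mk x y δ ∈ distTriang C)
    (hx : WMonic C (T ∩ U) x) (hy : WEpic C (T ∩ U) y)
    {D E : C} (f : A ⟶ D) (d : D ⟶ E) (e : E ⟶ X)
    (hdist' : Triangle.mk d e (δ ≫ (shiftFunctor C (1 : ℤ)).map f) ∈ distTriang C) :
    WMonic C (T ∩ U) d ∧ WEpic C (T ∩ U) e := by
  refine ⟨?_, ?_⟩
  · intro W₀ hW g
    obtain ⟨k, hk⟩ := hx hW (f ≫ g)
    have h31 : δ ≫ (shiftFunctor C (1 : ℤ)).map x = 0 := comp_distTriang_mor_zero₃₁ _ hdist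
    have h0 : (δ ≫ (shiftFunctor C (1 : ℤ)).map f) ≫ (shiftFunctor C (1 : ℤ)).map g = 0 := by
      rw [Category.assoc, ← Functor.map_comp, ← hk, Functor.map_comp, ← Category.assoc, h31,
        zero_comp]
    have key : ∃ l : E⟦(1 : ℤ)⟧ ⟶ W₀⟦(1 : ℤ)⟧, (shiftFunctor C (1 : ℤ)).map g =
        (-(shiftFunctor C (1 : ℤ)).map d) ≫ l :=
      Triangle.yoneda_exact₃ _ (rot_of_distTriang _ hdist')
        ((shiftFunctor C (1 : ℤ)).map g) h0
    obtain ⟨l, hl⟩ := key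
    obtain ⟨m, hm⟩ := (shiftFunctor C (1 : ℤ)).map_surjective l
    refine ⟨-m, (shiftFunctor C (1 : ℤ)).map_injective ?_⟩
    rw [hl, ← hm]
    simp
  · intro W₀ hW g
    obtain ⟨k, hk⟩ := hy hW g
    have h23 : y ≫ δ = 0 := comp_distTriang_mor_zero₂₃ _ hdist
    have h0 : g ≫ (δ ≫ (shiftFunctor C (1 : ℤ)).map f) = 0 := by
      rw [← hk, Category.assoc, ← Category.assoc y, h23, zero_comp, comp_zero]
    obtain ⟨l, hl⟩ := Triangle.coyoneda_exact₃ _ hdist' g h0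
    exact ⟨l, hl.symm⟩
end

section
/- Let C be a triangulated category, ((S, T), (U, V)) a twin cotorsion pair on C, and W = T ∩ U. Suppose A →f B →f' C → A[1] and B →g D →g' F → B[1] are distinguished triangles in which f and g are W-monic and f' and g' are W-epic. Then g ∘ f is W-monic, and there exists a distinguished triangle A →(g∘f) D →e E → A[1] whose second morphism e is W-epic. -/
open CategoryTheory CategoryTheory.Limits CategoryTheory.Pretriangulated

universe v u

variable (C : Type u) [Category.{v} C] [Preadditive C] [HasZeroObject C] [HasShift C ℤ]
  [∀ n : ℤ, (shiftFunctor C n).Additive] [Pretriangulated C]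

/-- **Proposition 3.4(2).** Let `((S, T), (U, V))` be a twin cotorsion pair with
`W = T ∩ U`. Given distinguished triangles `A →f B →f' X → A[1]` and
`B →g D →g' F → B[1]` in which `f`, `g` are `W`-monic and `f'`, `g'` are `W`-epic,
the composite `f ≫ g` is `W`-monic and fits into a distinguished triangle
`A → D →e E → A[1]` whose second morphism `e` is `W`-epic. -/
theorem heart_stmt_6 {S T U V : Set C} (h : TwinCotorsionPair C S T U V)
    {A B X : C} (f : A ⟶ B) (f' : B ⟶ X) (δ : X ⟶ A⟦(1 : ℤ)⟧)
    (hdist₁ : Triangle.mk f f' δ ∈ distTriang C)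
    (hf : WMonic C (T ∩ U) f) (hf' : WEpic C (T ∩ U) f')
    {D F : C} (g : B ⟶ D) (g' : D ⟶ F) (ρ : F ⟶ B⟦(1 : ℤ)⟧)
    (hdist₂ : Triangle.mk g g' ρ ∈ distTriang C)
    (hg : WMonic C (T ∩ U) g) (hg' : WEpic C (T ∩ U) g') :
    WMonic C (T ∩ U) (f ≫ g) ∧
      ∃ (E : C) (e : D ⟶ E) (σ : E ⟶ A⟦(1 : ℤ)⟧),
        (Triangle.mk (f ≫ g) e σ ∈ distTriang C) ∧ WEpic C (T ∩ U) e := by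
  refine ⟨fun W₀ hW a => ?_, ?_⟩
  · obtain ⟨b, hb⟩ := hf hW a
    obtain ⟨d, hd⟩ := hg hW b
    exact ⟨d, by rw [Category.assoc, hd, hb]⟩
  · obtain ⟨E, e, σ, hE⟩ := distinguished_cocone_triangle (f ≫ g)
    refine ⟨E, e, σ, hE, fun W₀ hW w => ?_⟩
    have hc : (f ≫ g) ≫ 𝟙 D = f ≫ g := Category.comp_id _
    obtain ⟨m, hm'⟩ : ∃ m : E ⟶ F, σ ≫ f⟦(1 : ℤ)⟧' = m ≫ ρ := by
      obtain ⟨m, -, hm⟩ := complete_distinguished_triangle_morphism _ _ hE hdist₂ f (𝟙 D) hc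
      exact ⟨m, hm⟩
    have z₂ : g' ≫ ρ = 0 := comp_distTriang_mor_zero₂₃ _ hdist₂
    have z₁ : f' ≫ δ = 0 := comp_distTriang_mor_zero₂₃ _ hdist₁
    obtain ⟨d, hd⟩ := hg' hW (w ≫ m)
    have h0 : (w ≫ σ) ≫ f⟦(1 : ℤ)⟧' = 0 := by
      rw [Category.assoc, hm', ← Category.assoc, ← hd, Category.assoc, z₂, comp_zero]
    obtain ⟨k, hk⟩ : ∃ k : W₀ ⟶ X, w ≫ σ = k ≫ δ :=
      Triangle.coyoneda_exact₁ _ hdist₁ (w ≫ σ) h0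
    obtain ⟨b, hb⟩ := hf' hW k
    have h1 : w ≫ σ = 0 := by
      rw [hk, ← hb, Category.assoc, z₁, comp_zero]
    obtain ⟨l, hl⟩ := Triangle.coyoneda_exact₃ _ hE w h1
    exact ⟨l, hl.symm⟩
end

section
/- Let C be a triangulated category, W a class of objects of C, and A →x B →y C → A[1] a distinguished triangle. (i) If y is W-epic, then for every morphism z : D → B such that y ∘ z factors through an object of W, there exists d : D → A such that z − x ∘ d factors through an object of W. (ii) If x is W-monic, then for every morphism z : B → D such that z ∘ x factors through an object of W, there exists d : C → D such that z − d ∘ y factors through an object of W. (Thus, in the quotient of C by the ideal of morphisms factoring through W, the image of x is a weak kernel of the image of y and the image of y is a weak cokernel of the image of x.) -/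
open CategoryTheory CategoryTheory.Limits CategoryTheory.Pretriangulated

universe v u

variable (C : Type u) [Category.{v} C] [Preadditive C] [HasZeroObject C] [HasShift C ℤ]
  [∀ n : ℤ, (shiftFunctor C n).Additive] [Pretriangulated C]

/-- **Lemma 3.6** (object-level form). Let `W` be a class of objects and
`A →x B →y X →δ A[1]` a distinguished triangle.
(i) If `y` is `W`-epic and `z : D ⟶ B` is such that `z ≫ y` factors through an object
of `W`, then there is `d : D ⟶ A` with `z - d ≫ x` factoring through an object of `W`.
(ii) If `x` is `W`-monic and `z : B ⟶ D` is such that `x ≫ z` factors through an object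
of `W`, then there is `d : X ⟶ D` with `z - y ≫ d` factoring through an object of `W`.
Thus in the quotient by morphisms factoring through `W`, the image of `x` is a weak
kernel of the image of `y`, and the image of `y` a weak cokernel of the image of `x`. -/
theorem heart_stmt_7 (W : Set C)
    {A B X : C} (x : A ⟶ B) (y : B ⟶ X) (δ : X ⟶ A⟦(1 : ℤ)⟧)
    (hdist : Triangle.mk x y δ ∈ distTriang C) :
    (WEpic C W y → ∀ (D : C) (z : D ⟶ B), FactorsThruClass C W (z ≫ y) →
      ∃ d : D ⟶ A, FactorsThruClass C W (z - d ≫ x)) ∧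
    (WMonic C W x → ∀ (D : C) (z : B ⟶ D), FactorsThruClass C W (x ≫ z) →
      ∃ d : X ⟶ D, FactorsThruClass C W (z - y ≫ d)) := by
  refine ⟨?_, ?_⟩
  · rintro hy D z ⟨W₀, hW, g, h, hgh⟩
    obtain ⟨k, hk⟩ := hy hW h
    obtain ⟨d, hd⟩ := Triangle.coyoneda_exact₂ _ hdist (z - g ≫ k) (by
      change (z - g ≫ k) ≫ y = 0
      rw [Preadditive.sub_comp, Category.assoc, hk, hgh, sub_self])
    change D ⟶ A at d
    replace hd : z - g ≫ k = d ≫ x := hd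
    exact ⟨d, W₀, hW, g, k, by rw [← hd]; abel⟩
  · rintro hx D z ⟨W₀, hW, g, h, hgh⟩
    obtain ⟨k, hk⟩ := hx hW g
    obtain ⟨d, hd⟩ := Triangle.yoneda_exact₂ _ hdist (z - k ≫ h) (by
      change x ≫ (z - k ≫ h) = 0
      rw [Preadditive.comp_sub, ← Category.assoc, hk, hgh, sub_self])
    change X ⟶ D at d
    replace hd : z - k ≫ h = y ≫ d := hd
    exact ⟨d, W₀, hW, k, h, by rw [← hd]; abel⟩
end

section
/- Let C be a triangulated category, ((S, T), (U, V)) a twin cotorsion pair on C, and W = T ∩ U. Let A →x B →y C →δ A[1] be a distinguished triangle with δ ≠ 0 (i.e., nonsplit), x W-monic, y W-epic, and A, B, C ∈ H = B⁺ ∩ B⁻. Then none of A, B, C belongs to W. -/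
open CategoryTheory CategoryTheory.Limits CategoryTheory.Pretriangulated

universe v u

variable (C : Type u) [Category.{v} C] [Preadditive C] [HasZeroObject C] [HasShift C ℤ]
  [∀ n : ℤ, (shiftFunctor C n).Additive] [Pretriangulated C]

/-- **Corollary 3.7.** Let `((S, T), (U, V))` be a twin cotorsion pair with `W = T ∩ U`,
and let `A →x B →y X →δ A[1]` be a nonsplit (`δ ≠ 0`) distinguished triangle with `x`
`W`-monic, `y` `W`-epic, and `A, B, X` in the heart `H = B⁺ ∩ B⁻`. Then none of
`A`, `B`, `X` belongs to `W`. -/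
theorem heart_stmt_8 {S T U V : Set C} (h : TwinCotorsionPair C S T U V)
    {A B X : C} (x : A ⟶ B) (y : B ⟶ X) (δ : X ⟶ A⟦(1 : ℤ)⟧)
    (hdist : Triangle.mk x y δ ∈ distTriang C) (hδ : δ ≠ 0)
    (hx : WMonic C (T ∩ U) x) (hy : WEpic C (T ∩ U) y)
    (hA : A ∈ Heart C S V (T ∩ U)) (hB : B ∈ Heart C S V (T ∩ U))
    (hX : X ∈ Heart C S V (T ∩ U)) :
    A ∉ T ∩ U ∧ B ∉ T ∩ U ∧ X ∉ T ∩ U := by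
  have h31 : δ ≫ x⟦(1 : ℤ)⟧' = 0 := comp_distTriang_mor_zero₃₁ _ hdist
  have h23 : y ≫ δ = 0 := comp_distTriang_mor_zero₂₃ _ hdist
  refine ⟨fun hAW => hδ ?_, fun hBW => hδ ?_, fun hXW => hδ ?_⟩
  · obtain ⟨r, hr⟩ := hx hAW (𝟙 A)
    have : δ ≫ x⟦(1 : ℤ)⟧' ≫ r⟦(1 : ℤ)⟧' = δ := by
      rw [← Functor.map_comp, hr, CategoryTheory.Functor.map_id, Category.comp_id]
    rw [← this, ← Category.assoc, h31, zero_comp]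
  · obtain ⟨⟨_, _, _, _, hST, _⟩, ⟨_, _, _, _, hUV, _⟩, hSU⟩ := h
    obtain ⟨WA, SA, hWA, hSA, f, g, δS, hS⟩ := hA.2
    obtain ⟨VX, WX, hVX, hWX, f', g', δV, hV⟩ := hX.1
    obtain ⟨b, hb⟩ := hx hWA f
    obtain ⟨k, hk⟩ := hy hWX g'
    have e1 : ∃ c : X ⟶ SA, δ = c ≫ δS := by
      obtain ⟨c, _, hc⟩ := complete_distinguished_triangle_morphism _ _ hdist hS (𝟙 A) b
        (hb.trans (Category.id_comp f).symm)
      refine ⟨c, Eq.trans ?_ hc⟩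
      change δ = δ ≫ (shiftFunctor C (1 : ℤ)).map (𝟙 A)
      rw [CategoryTheory.Functor.map_id, Category.comp_id]
    have e2 : ∃ m : VX ⟶ A, δV ≫ m⟦(1 : ℤ)⟧' = δ := by
      obtain ⟨m, _, hm⟩ := complete_distinguished_triangle_morphism₁ _ _ hV hdist k (𝟙 X)
        ((Category.comp_id g').trans hk.symm)
      exact ⟨m, hm.trans (Category.id_comp δ)⟩
    have e3 : ∃ d : SA ⟶ X, δS = d ≫ δ :=
      Triangle.coyoneda_exact₁ _ hdist δS (hST hSA hBW.1 _)
    obtain ⟨c, hc'⟩ := e1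
    obtain ⟨m, hm'⟩ := e2
    obtain ⟨d, hd'⟩ := e3
    have h0 : d ≫ δV = 0 := hUV (hSU hSA) hVX _
    rw [hc', hd', ← hm', ← Category.assoc d, h0, zero_comp, comp_zero]
  · obtain ⟨r, hr⟩ := hy hXW (𝟙 X)
    rw [← Category.id_comp δ, ← hr, Category.assoc, h23, comp_zero]
end

section
/- Let C be a triangulated category and ((S, T), (U, V)) a twin cotorsion pair on C. Define B₁⁺ as the class of objects X admitting a distinguished triangle T → M → X → T[1] with T ∈ T and M ∈ S ∩ T, and B₂⁻ as the class of objects Y admitting a distinguished triangle Y → N' → U → Y[1] with N' ∈ U ∩ V and U ∈ U. Then B⁺ ⊆ B₁⁺ and B⁻ ⊆ B₂⁻. -/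
open CategoryTheory CategoryTheory.Limits CategoryTheory.Pretriangulated

universe v u

variable (C : Type u) [Category.{v} C] [Preadditive C] [HasZeroObject C] [HasShift C ℤ]
  [∀ n : ℤ, (shiftFunctor C n).Additive] [Pretriangulated C]

theorem mem_right_of_hom_zero {U V : Set C} (h : CotorsionPair C U V) (Y : C)
    (hY : ∀ X ∈ U, ∀ f : X ⟶ Y⟦(1 : ℤ)⟧, f = 0) : Y ∈ V := by
  obtain ⟨-, -, -, hs, -, hex⟩ := h
  obtain ⟨V₀, U₀, hV, hU, x, y, δ, hT⟩ := hex (Y⟦(1 : ℤ)⟧)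
  have hy : y = 0 := hY U₀ hU y
  obtain ⟨r, hr⟩ := Triangle.yoneda_exact₃ _ hT (𝟙 _)
    (by change y ≫ 𝟙 (Y⟦(1 : ℤ)⟧) = 0; rw [hy, zero_comp])
  change V₀⟦(1 : ℤ)⟧ ⟶ Y⟦(1 : ℤ)⟧ at r
  change 𝟙 (Y⟦(1 : ℤ)⟧) = δ ≫ r at hr
  obtain ⟨i, rfl⟩ := (shiftFunctor C (1 : ℤ)).map_surjective δ
  obtain ⟨p, rfl⟩ := (shiftFunctor C (1 : ℤ)).map_surjective r
  refine hs hV ⟨i, p, (shiftFunctor C (1 : ℤ)).map_injective ?_⟩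
  rw [Functor.map_comp, CategoryTheory.Functor.map_id, ← hr]

theorem mem_left_of_hom_zero {U V : Set C} (h : CotorsionPair C U V) (X : C)
    (hX : ∀ Y ∈ V, ∀ f : X ⟶ Y⟦(1 : ℤ)⟧, f = 0) : X ∈ U := by
  obtain ⟨-, hs, -, -, -, hex⟩ := h
  obtain ⟨V₀, U₀, hV, hU, x, y, δ, hT⟩ := hex X
  have hd : δ = 0 := hX V₀ hV δ
  obtain ⟨i, hi⟩ := Triangle.coyoneda_exact₃ _ hT (𝟙 X)
    (by change 𝟙 X ≫ δ = 0; rw [hd, comp_zero])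
  exact hs hU ⟨i, y, hi.symm⟩

/-- **Lemma 4.1.** Let `((S, T), (U, V))` be a twin cotorsion pair. With
`B₁⁺` the class of objects `X` admitting a distinguished triangle `T₀ → M → X → T₀[1]`
(`T₀ ∈ T`, `M ∈ S ∩ T`) and `B₂⁻` the class of objects `Y` admitting a distinguished
triangle `Y → N' → U₀ → Y[1]` (`N' ∈ U ∩ V`, `U₀ ∈ U`), we have `B⁺ ⊆ B₁⁺` and
`B⁻ ⊆ B₂⁻`. -/
theorem heart_stmt_9 {S T U V : Set C} (h : TwinCotorsionPair C S T U V) :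
    Bplus C V (T ∩ U) ⊆ Bplus C T (S ∩ T) ∧
    Bminus C S (T ∩ U) ⊆ Bminus C U (U ∩ V) := by
  obtain ⟨hST, hUV, hSU⟩ := h
  constructor
  · rintro X ⟨V₀, W₀, hV, ⟨hWT, hWU⟩, f, g, δ, hT⟩
    obtain ⟨T₀, S₀, hT₀, hS₀, x, y, e, hE⟩ := hST.2.2.2.2.2 X
    refine ⟨T₀, S₀, hT₀, ⟨hS₀, mem_right_of_hom_zero C hST S₀ ?_⟩, x, y, e, hE⟩
    intro S' hS' φ
    obtain ⟨k, hk⟩ := Triangle.coyoneda_exact₃ _ hT y (hUV.2.2.2.2.1 (hSU hS₀) hV _)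
    change S₀ ⟶ W₀ at k
    change y = k ≫ g at hk
    obtain ⟨l, hl⟩ := Triangle.coyoneda_exact₁ _ (rot_of_distTriang _ hE) φ (by
      change φ ≫ y⟦(1 : ℤ)⟧' = 0
      rw [hk, Functor.map_comp, ← Category.assoc,
        hST.2.2.2.2.1 hS' hWT (φ ≫ k⟦(1 : ℤ)⟧'), zero_comp])
    have h0 : l = 0 := hST.2.2.2.2.1 hS' hT₀ l
    rw [hl, h0]; exact zero_comp
  · rintro Y ⟨W₀, S₀, ⟨hWT, hWU⟩, hS, f, g, δ, hT⟩
    obtain ⟨V₀, U₀, hV₀, hU₀, x, y, e, hE⟩ := hUV.2.2.2.2.2 (Y⟦(1 : ℤ)⟧)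
    obtain ⟨a, rfl⟩ := (shiftFunctor C (1 : ℤ)).map_surjective e
    have hD : Triangle.mk (-a) x y ∈ distTriang C := by
      rw [rotate_distinguished_triangle]
      convert hE using 1
      change Triangle.mk x y (-(-a)⟦(1 : ℤ)⟧') = _
      rw [Functor.map_neg, neg_neg]
    refine ⟨V₀, U₀, ⟨mem_left_of_hom_zero C hUV V₀ ?_, hV₀⟩, hU₀, -a, x, y, hD⟩
    intro V' hV' φ
    obtain ⟨k, hk⟩ := Triangle.yoneda_exact₂ _
      (rot_of_distTriang _ (rot_of_distTriang _ hT)) (a⟦(1 : ℤ)⟧')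
      (hUV.2.2.2.2.1 (hSU hS) hV₀ _)
    change W₀⟦(1 : ℤ)⟧ ⟶ V₀⟦(1 : ℤ)⟧ at k
    change a⟦(1 : ℤ)⟧' = (-f⟦(1 : ℤ)⟧') ≫ k at hk
    obtain ⟨k, rfl⟩ := (shiftFunctor C (1 : ℤ)).map_surjective k
    have hak : a = (-f) ≫ k := (shiftFunctor C (1 : ℤ)).map_injective (by
      rw [hk]; simp)
    obtain ⟨l, hl⟩ := Triangle.yoneda_exact₂ _ hD φ (by
      change (-a) ≫ φ = 0
      have h0 : k ≫ φ = 0 := hUV.2.2.2.2.1 hWU hV' _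
      rw [hak]; simp [h0])
    have h0 : l = 0 := hUV.2.2.2.2.1 hU₀ hV' l
    rw [hl, h0]; exact comp_zero
end

section
/- Let C be a triangulated category and ((S, T), (U, V)) a twin cotorsion pair on C with W = T ∩ U. Define B₁⁺ as the class of objects X admitting a distinguished triangle T → M → X → T[1] with T ∈ T and M ∈ S ∩ T, B₁⁻ as the class of objects Y admitting a distinguished triangle Y → M' → S → Y[1] with M' ∈ S ∩ T and S ∈ S, and H₁ = B₁⁺ ∩ B₁⁻. Then for any morphism f : A → B with A, B ∈ H₁, f factors through an object of W if and only if f factors through an object of S ∩ T. -/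
open CategoryTheory CategoryTheory.Limits CategoryTheory.Pretriangulated

universe v u

variable (C : Type u) [Category.{v} C] [Preadditive C] [HasZeroObject C] [HasShift C ℤ]
  [∀ n : ℤ, (shiftFunctor C n).Additive] [Pretriangulated C]

/-- **Lemma 4.2(1).** Let `((S, T), (U, V))` be a twin cotorsion pair with `W = T ∩ U`
and let `H₁ = B₁⁺ ∩ B₁⁻` be the heart of `(S, T)`. A morphism `f : A ⟶ B` with
`A, B ∈ H₁` factors through an object of `W` if and only if it factors through an
object of `S ∩ T`. -/
theorem heart_stmt_10 {S T U V : Set C} (h : TwinCotorsionPair C S T U V)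
    {A B : C} (f : A ⟶ B)
    (hA : A ∈ Bplus C T (S ∩ T) ∩ Bminus C S (S ∩ T))
    (hB : B ∈ Bplus C T (S ∩ T) ∩ Bminus C S (S ∩ T)) :
    FactorsThruClass C (T ∩ U) f ↔ FactorsThruClass C (S ∩ T) f := by
  constructor
  · rintro ⟨W₀, hW, g, k, rfl⟩
    obtain ⟨M, S₀, hM, hS, a, b, δ, hT⟩ := hA.2
    have hz : δ ≫ g⟦(1 : ℤ)⟧' = 0 := h.1.2.2.2.2.1 hS hW.1 _
    have key : ∃ m : M ⟶ W₀, a ≫ m = g ≫ 𝟙 W₀ := by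
      obtain ⟨m, hm, -⟩ := complete_distinguished_triangle_morphism₂ _ _ hT
        (contractible_distinguished W₀) g 0 (hz.trans zero_comp.symm)
      exact ⟨m, hm⟩
    obtain ⟨m, hm⟩ := key
    refine ⟨M, hM, a, m ≫ k, ?_⟩
    rw [← Category.assoc, hm, Category.comp_id]
  · rintro ⟨W₀, hW, g, k, rfl⟩
    exact ⟨W₀, ⟨hW.2, h.2.2 hW.1⟩, g, k, rfl⟩
end

section
/- Let C be a triangulated category and let A →x B →y C →δ A[1] be a distinguished triangle with δ ≠ 0, such that x is left almost split (every morphism a : A → M that is not a split monomorphism factors through x) and y is right almost split (every morphism c : N → C that is not a split epimorphism factors through y). If the endomorphism ring of C is local, then x is left minimal (every b : B → B with b ∘ x = x is an isomorphism); dually, if the endomorphism ring of A is local, then y is right minimal (every b : B → B with y ∘ b = y is an isomorphism). -/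
open CategoryTheory CategoryTheory.Limits CategoryTheory.Pretriangulated

universe v u

variable (C : Type u) [Category.{v} C] [Preadditive C] [HasZeroObject C] [HasShift C ℤ]
  [∀ n : ℤ, (shiftFunctor C n).Additive] [Pretriangulated C]

/-- **Lemma 5.5** (triangulated case). Let `A →x B →y X →δ A[1]` be a distinguished
triangle with `δ ≠ 0`, `x` left almost split and `y` right almost split. If the
endomorphism ring of `X` is local then `x` is left minimal, and if the endomorphism
ring of `A` is local then `y` is right minimal. -/
theorem heart_stmt_11 {A B X : C} (x : A ⟶ B) (y : B ⟶ X) (δ : X ⟶ A⟦(1 : ℤ)⟧)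
    (hdist : Triangle.mk x y δ ∈ distTriang C) (hδ : δ ≠ 0)
    (hx : LeftAlmostSplit C x) (hy : RightAlmostSplit C y) :
    (IsLocalRing (End X) → ∀ b : B ⟶ B, x ≫ b = x → IsIso b) ∧
    (IsLocalRing (End A) → ∀ b : B ⟶ B, b ≫ y = y → IsIso b) := by
  constructor
  · intro hloc b hb
    have hb1 : x ≫ b = 𝟙 A ≫ x := by rw [hb, Category.id_comp]
    obtain ⟨c, hc1, hc2⟩ : ∃ c : X ⟶ X, y ≫ c = b ≫ y ∧
      δ ≫ (𝟙 A)⟦(1 : ℤ)⟧' = c ≫ δ := complete_distinguished_triangle_morphism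
      (Triangle.mk x y δ) (Triangle.mk x y δ) hdist hdist (𝟙 A) b
      hb1
    have hcd : c ≫ δ = δ := by rw [← hc2]; simp
    have hc : IsIso c := by
      rcases IsLocalRing.isUnit_or_isUnit_of_add_one
        (R := End X) (a := c) (b := (𝟙 X - c : X ⟶ X))
        (add_sub_cancel (G := (X ⟶ X)) c (𝟙 X)) with h | h
      · exact (isUnit_iff_isIso c).1 h
      · exfalso
        have hi : IsIso (𝟙 X - c) := (isUnit_iff_isIso _).1 h
        apply hδ
        rw [← cancel_epi (𝟙 X - c)]
        simp [Preadditive.sub_comp, hcd]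
    exact isIso₂_of_isIso₁₃ (Triangle.homMk (Triangle.mk x y δ) (Triangle.mk x y δ)
      (𝟙 A) b c hb1 hc1 hc2) hdist hdist
      (inferInstance : IsIso (𝟙 A)) hc
  · intro hloc b hb
    have hb1 : y ≫ 𝟙 X = b ≫ y := by rw [hb, Category.comp_id]
    obtain ⟨a, ha1, ha2⟩ : ∃ a : A ⟶ A, x ≫ b = a ≫ x ∧
      δ ≫ a⟦(1 : ℤ)⟧' = 𝟙 X ≫ δ := complete_distinguished_triangle_morphism₁
      (Triangle.mk x y δ) (Triangle.mk x y δ) hdist hdist b (𝟙 X)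
      hb1
    have had : δ ≫ a⟦(1 : ℤ)⟧' = δ := by rw [ha2]; simp
    have ha : IsIso a := by
      rcases IsLocalRing.isUnit_or_isUnit_of_add_one
        (R := End A) (a := a) (b := (𝟙 A - a : A ⟶ A))
        (add_sub_cancel (G := (A ⟶ A)) a (𝟙 A)) with h | h
      · exact (isUnit_iff_isIso a).1 h
      · exfalso
        have hi : IsIso (𝟙 A - a) := (isUnit_iff_isIso _).1 h
        apply hδ
        rw [← cancel_mono ((𝟙 A - a)⟦(1 : ℤ)⟧')]
        simp [Functor.map_sub, Preadditive.comp_sub, had]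
    exact isIso₂_of_isIso₁₃ (Triangle.homMk (Triangle.mk x y δ) (Triangle.mk x y δ)
      a b (𝟙 X) ha1 hb1 ha2) hdist hdist ha
      (inferInstance : IsIso (𝟙 X))
end

section
/- Let C be a triangulated category, ((S, T), (U, V)) a twin cotorsion pair on C, and W = T ∩ U. Let A →x B →y C →δ A[1] be an almost split triangle (δ ≠ 0, x left almost split, y right almost split) such that A and C are nonzero objects of H = B⁺ ∩ B⁻ having no nonzero direct summand in W. Then x is W-monic, y is W-epic, and B ∈ H. -/
open CategoryTheory CategoryTheory.Limits CategoryTheory.Pretriangulated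

universe v u

variable (C : Type u) [Category.{v} C] [Preadditive C] [HasZeroObject C] [HasShift C ℤ]
  [∀ n : ℤ, (shiftFunctor C n).Additive] [Pretriangulated C]

section wrappers
variable {C}
variable {P Q R : C} {x : P ⟶ Q} {y : Q ⟶ R} {d : R ⟶ P⟦(1 : ℤ)⟧}

lemma ye2 (hd : Triangle.mk x y d ∈ distTriang C) {M : C} (f : Q ⟶ M) (hf : x ≫ f = 0) :
    ∃ g : R ⟶ M, f = y ≫ g := Triangle.yoneda_exact₂ _ hd f hf

lemma ye3 (hd : Triangle.mk x y d ∈ distTriang C) {M : C} (f : R ⟶ M) (hf : y ≫ f = 0) :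
    ∃ g : P⟦(1 : ℤ)⟧ ⟶ M, f = d ≫ g := Triangle.yoneda_exact₃ _ hd f hf

lemma ce2 (hd : Triangle.mk x y d ∈ distTriang C) {M : C} (f : M ⟶ Q) (hf : f ≫ y = 0) :
    ∃ g : M ⟶ P, f = g ≫ x := Triangle.coyoneda_exact₂ _ hd f hf

lemma ce3 (hd : Triangle.mk x y d ∈ distTriang C) {M : C} (f : M ⟶ R) (hf : f ≫ d = 0) :
    ∃ g : M ⟶ Q, f = g ≫ y := Triangle.coyoneda_exact₃ _ hd f hf

lemma ce1r (hd : Triangle.mk x y d ∈ distTriang C) {M : C} (f : M ⟶ Q⟦(1 : ℤ)⟧)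
    (hf : f ≫ y⟦(1 : ℤ)⟧' = 0) : ∃ g : M ⟶ P⟦(1 : ℤ)⟧, f = g ≫ (-x⟦(1 : ℤ)⟧') :=
  Triangle.coyoneda_exact₁ _ (rot_of_distTriang _ hd) f hf

lemma ye1 (hd : Triangle.mk x y d ∈ distTriang C) {M : C} (f : P ⟶ M)
    (hf : d ≫ f⟦(1 : ℤ)⟧' = 0) : ∃ g : Q ⟶ M, f = x ≫ g := by
  have hd2 : Triangle.mk y d (-x⟦(1 : ℤ)⟧') ∈ distTriang C := rot_of_distTriang _ hd
  obtain ⟨g, hg⟩ := ye3 hd2 _ hf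
  refine ⟨-(shiftFunctor C (1 : ℤ)).preimage g, ?_⟩
  apply (shiftFunctor C (1 : ℤ)).map_injective
  simp [hg]

end wrappers

lemma mem_right {S T : Set C} (h : CotorsionPair C S T) {Y : C}
    (hY : ∀ ⦃Z : C⦄, Z ∈ S → ∀ s : Z ⟶ Y⟦(1 : ℤ)⟧, s = 0) : Y ∈ T := by
  obtain ⟨-, -, -, hT, -, hex⟩ := h
  obtain ⟨T₀, S₀, hT₀, hS₀, a, b, d, hd⟩ := hex (Y⟦(1 : ℤ)⟧)
  obtain ⟨r, hr⟩ := ye3 hd (𝟙 (Y⟦(1 : ℤ)⟧))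
    (by
      have := hY hS₀ b
      rw [this, zero_comp])
  refine hT hT₀ ⟨(shiftFunctor C (1 : ℤ)).preimage d, (shiftFunctor C (1 : ℤ)).preimage r, ?_⟩
  apply (shiftFunctor C (1 : ℤ)).map_injective
  simp [← hr]

lemma mem_left {U V : Set C} (h : CotorsionPair C U V) {Y : C}
    (hY : ∀ ⦃Z : C⦄, Z ∈ V → ∀ s : Y ⟶ Z⟦(1 : ℤ)⟧, s = 0) : Y ∈ U := by
  obtain ⟨-, hU, -, -, -, hex⟩ := h
  obtain ⟨V₀, U₀, hV₀, hU₀, a, b, d, hd⟩ := hex Y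
  obtain ⟨r, hr⟩ := ce3 hd (𝟙 Y)
    (by
      have := hY hV₀ d
      rw [this, comp_zero])
  exact hU hU₀ ⟨r, b, hr.symm⟩

lemma bplus_of {S T U V : Set C} (h : TwinCotorsionPair C S T U V) {B : C}
    (hB : ∀ ⦃S₀ U₀ : C⦄, S₀ ∈ S → U₀ ∈ U → ∀ (s : S₀ ⟶ U₀⟦(1 : ℤ)⟧) (u : U₀ ⟶ B),
      s ≫ u⟦(1 : ℤ)⟧' = 0) : B ∈ Bplus C V (T ∩ U) := by
  obtain ⟨hST, hUV, hSU⟩ := h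
  obtain ⟨V₀, U₀, hV₀, hU₀, a, b, d, hd⟩ := hUV.2.2.2.2.2 B
  refine ⟨V₀, U₀, hV₀, ⟨mem_right C hST fun Z hZ s => ?_, hU₀⟩, a, b, d, hd⟩
  obtain ⟨g, hg⟩ := ce1r hd s (hB hZ hU₀ s b)
  have hg0 : g = 0 := hUV.2.2.2.2.1 (hSU hZ) hV₀ g
  rw [hg, hg0, zero_comp]

lemma bminus_of {S T U V : Set C} (h : TwinCotorsionPair C S T U V) {B : C}
    (hB : ∀ ⦃T₀ V₀ : C⦄, T₀ ∈ T → V₀ ∈ V → ∀ (t : B ⟶ T₀) (g : T₀ ⟶ V₀⟦(1 : ℤ)⟧),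
      t ≫ g = 0) : B ∈ Bminus C S (T ∩ U) := by
  obtain ⟨hST, hUV, hSU⟩ := h
  obtain ⟨T₀, S₀, hT₀, hS₀, a, b, d, hd⟩ := hST.2.2.2.2.2 (B⟦(1 : ℤ)⟧)
  obtain ⟨d', rfl⟩ := (shiftFunctor C (1 : ℤ)).map_surjective d
  have hd' : Triangle.mk (-d') a b ∈ distTriang C := by
    rw [rotate_distinguished_triangle]
    have e : (Triangle.mk (-d') a b).rotate =
        Triangle.mk a b ((shiftFunctor C (1 : ℤ)).map d') := by
      change Triangle.mk a b (-(shiftFunctor C (1 : ℤ)).map (-d')) = _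
      rw [Functor.map_neg, neg_neg]
    rw [e]
    exact hd
  refine ⟨T₀, S₀, ⟨hT₀, mem_left C hUV fun Z hZ s => ?_⟩, hS₀, _, _, _, hd'⟩
  obtain ⟨g, hg⟩ := ye2 hd' s (hB hT₀ hZ _ s)
  have hg0 : g = 0 := hUV.2.2.2.2.1 (hSU hS₀) hZ g
  rw [hg, hg0, comp_zero]

lemma bplus_zero {S T U V : Set C} (h : TwinCotorsionPair C S T U V) {B : C}
    (hB : B ∈ Bplus C V (T ∩ U)) ⦃S₀ U₀ : C⦄ (hS : S₀ ∈ S) (hU : U₀ ∈ U)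
    (s : S₀ ⟶ U₀⟦(1 : ℤ)⟧) (u : U₀ ⟶ B) : s ≫ u⟦(1 : ℤ)⟧' = 0 := by
  obtain ⟨V₀, W₀, hV₀, hW₀, a, b, d, hd⟩ := hB
  obtain ⟨k, hk⟩ := ce3 hd u (h.2.1.2.2.2.2.1 hU hV₀ _)
  rw [hk, Functor.map_comp, ← Category.assoc, h.1.2.2.2.2.1 hS hW₀.1 (s ≫ k⟦(1 : ℤ)⟧'), zero_comp]

lemma bminus_factor {S T U V : Set C} (h : TwinCotorsionPair C S T U V) {B : C}
    (hB : B ∈ Bminus C S (T ∩ U)) ⦃T₀ : C⦄ (hT : T₀ ∈ T) (t : B ⟶ T₀) :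
    FactorsThruClass C (T ∩ U) t := by
  obtain ⟨W₀, S₀, hW₀, hS₀, a, b, d, hd⟩ := hB
  obtain ⟨k, hk⟩ := ye1 hd t (h.1.2.2.2.2.1 hS₀ hT _)
  exact ⟨W₀, hW₀, a, k, hk.symm⟩

lemma bminus_zero {S T U V : Set C} (h : TwinCotorsionPair C S T U V) {B : C}
    (hB : B ∈ Bminus C S (T ∩ U)) ⦃T₀ V₀ : C⦄ (hT : T₀ ∈ T) (hV : V₀ ∈ V)
    (t : B ⟶ T₀) (g : T₀ ⟶ V₀⟦(1 : ℤ)⟧) : t ≫ g = 0 := by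
  obtain ⟨W₀, hW₀, a, k, rfl⟩ := bminus_factor C h hB hT t
  rw [Category.assoc, h.2.1.2.2.2.2.1 hW₀.2 hV (k ≫ g), comp_zero]

/-- **Proposition 5.7** (with Lemma 3.2). Let `((S, T), (U, V))` be a twin cotorsion
pair with `W = T ∩ U` and let `A →x B →y X →δ A[1]` be an almost split triangle whose
end terms `A` and `X` are nonzero objects of the heart `H = B⁺ ∩ B⁻` having no nonzero
direct summand in `W`. Then `x` is `W`-monic, `y` is `W`-epic, and `B ∈ H`. -/
theorem heart_stmt_12 {S T U V : Set C} (h : TwinCotorsionPair C S T U V)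
    {A B X : C} (x : A ⟶ B) (y : B ⟶ X) (δ : X ⟶ A⟦(1 : ℤ)⟧)
    (hAS : IsAlmostSplitTriangle C x y δ)
    (hA : A ∈ Heart C S V (T ∩ U)) (hX : X ∈ Heart C S V (T ∩ U))
    (hA0 : ¬ IsZero A) (hX0 : ¬ IsZero X)
    (hAW : ∀ D : C, D ∈ T ∩ U → (∃ (i : D ⟶ A) (p : A ⟶ D), i ≫ p = 𝟙 D) → IsZero D)
    (hXW : ∀ D : C, D ∈ T ∩ U → (∃ (i : D ⟶ X) (p : X ⟶ D), i ≫ p = 𝟙 D) → IsZero D) :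
    WMonic C (T ∩ U) x ∧ WEpic C (T ∩ U) y ∧ B ∈ Heart C S V (T ∩ U) := by
  obtain ⟨hd, -, hL, hR⟩ := hAS
  have hsum : ∀ ⦃D W₀ : C⦄, W₀ ∈ T ∩ U → (∃ (i : D ⟶ W₀) (p : W₀ ⟶ D), i ≫ p = 𝟙 D) →
      D ∈ T ∩ U := fun D W₀ hW hr => ⟨h.1.2.2.2.1 hW.1 hr, h.2.1.2.1 hW.2 hr⟩
  have hM : WMonic C (T ∩ U) x := fun W₀ hW g => hL g fun ⟨r, hr⟩ =>
    hA0 (hAW A (hsum hW ⟨g, r, hr⟩) ⟨𝟙 A, 𝟙 A, Category.comp_id _⟩)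
  have hE : WEpic C (T ∩ U) y := fun W₀ hW g => hR g fun ⟨r, hr⟩ =>
    hX0 (hXW X (hsum hW ⟨r, g, hr⟩) ⟨𝟙 X, 𝟙 X, Category.comp_id _⟩)
  refine ⟨hM, hE, bplus_of C h ?_, bminus_of C h ?_⟩
  · intro S₀ U₀ hS hU s u
    obtain ⟨V₁, W₁, hV₁, hW₁, a, b, d, hd₁⟩ := hX.1
    obtain ⟨k, hk⟩ := ce3 hd₁ (u ≫ y) (h.2.1.2.2.2.2.1 hU hV₁ _)
    obtain ⟨l, hl⟩ := hE hW₁ b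
    obtain ⟨m, hm⟩ := ce2 hd (u - k ≫ l) (by
      rw [Preadditive.sub_comp, Category.assoc, hl, hk, sub_self])
    have h1 := bplus_zero C h hA.1 hS hU s m
    have h2 := h.1.2.2.2.2.1 hS hW₁.1 (s ≫ k⟦(1 : ℤ)⟧')
    rw [sub_eq_iff_eq_add.1 hm, Functor.map_add, Functor.map_comp, Functor.map_comp,
      Preadditive.comp_add, reassoc_of% h1, reassoc_of% h2, zero_comp, zero_comp, add_zero]
  · intro T₀ V₀ hT hV t g
    obtain ⟨W₁, hW₁, a, k, hk⟩ := bminus_factor C h hA.2 hT (x ≫ t)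
    obtain ⟨l, hl⟩ := hM hW₁ a
    obtain ⟨m, hm⟩ := ye2 hd (t - l ≫ k) (by
      rw [Preadditive.comp_sub, reassoc_of% hl, hk, sub_self])
    have h1 := bminus_zero C h hX.2 hT hV m g
    have h2 := h.2.1.2.2.2.2.1 hW₁.2 hV (k ≫ g)
    rw [sub_eq_iff_eq_add.1 hm, Preadditive.add_comp, Category.assoc, Category.assoc, h1, h2,
      comp_zero, comp_zero, add_zero]
end

section
/- Let k be a field and C a Krull–Schmidt, Hom-finite, k-linear triangulated category (every Hom space is a finite-dimensional k-vector space, and every object is isomorphic to a finite direct sum of objects with local endomorphism rings). If C has a cluster tilting object T, then C has a Serre functor: there exist a k-linear autoequivalence S : C → C and k-linear isomorphisms Hom(A, B) ≅ Hom(B, S(A))* (where (−)* denotes k-linear dual), natural in both A and B. -/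
open CategoryTheory CategoryTheory.Limits CategoryTheory.Pretriangulated

universe v u

variable (k : Type*) [Field k]
variable (C : Type u) [Category.{v} C] [Preadditive C] [HasZeroObject C] [HasShift C ℤ]
  [∀ n : ℤ, (shiftFunctor C n).Additive] [Pretriangulated C]
  [HasFiniteBiproducts C] [Linear k C]

/-- `C` is Krull–Schmidt: every object is isomorphic to a finite direct sum of objects
with local endomorphism rings. -/
def KrullSchmidt : Prop :=
  ∀ X : C, ∃ (n : ℕ) (f : Fin n → C) (_ : X ≅ ⨁ f), ∀ i, IsLocalRing (End (f i))

/-- `add T`: the objects isomorphic to direct summands of finite direct sums of copies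
of `T`, described as retracts of finite powers `T^n`. -/
def addSet (T : C) : Set C :=
  {X | ∃ (n : ℕ) (i : X ⟶ ⨁ (fun _ : Fin n => T)) (p : ⨁ (fun _ : Fin n => T) ⟶ X),
    i ≫ p = 𝟙 X}

/-- `T` is a cluster tilting object: for every `X`, membership in `add T` is equivalent
to the vanishing of `Hom(T, X[1])` and to the vanishing of `Hom(X, T[1])`. -/
def ClusterTilting (T : C) : Prop :=
  ∀ X : C, (X ∈ addSet C T ↔ ∀ f : T ⟶ X⟦(1 : ℤ)⟧, f = 0) ∧
           (X ∈ addSet C T ↔ ∀ f : X ⟶ T⟦(1 : ℤ)⟧, f = 0)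

/-- An object is indecomposable if it is nonzero and in any biproduct decomposition one
summand vanishes. -/
def Indecomposable (X : C) : Prop :=
  ¬ IsZero X ∧ ∀ (Y Z : C), (X ≅ Y ⊞ Z) → IsZero Y ∨ IsZero Z

namespace SerreAux

section Generic

universe v' u' w'

variable {K : Type w'} [Field K] {D : Type u'} [Category.{v'} D] [Preadditive D] [Linear K D]

/-- Exactness in the middle for both kinds of Hom functors. -/
def Ex {X Y Z : D} (f : X ⟶ Y) (g : Y ⟶ Z) : Prop :=
  f ≫ g = 0 ∧ (∀ (W : D) (h : W ⟶ Y), h ≫ g = 0 → ∃ l : W ⟶ X, l ≫ f = h) ∧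
    (∀ (W : D) (h : Y ⟶ W), f ≫ h = 0 → ∃ l : Z ⟶ W, g ≫ l = h)

/-- Elementary description of `add T`. -/
def AddE (T W : D) : Prop :=
  ∃ (n : ℕ) (i : Fin n → (W ⟶ T)) (p : Fin n → (T ⟶ W)), ∑ j, i j ≫ p j = 𝟙 W

/-- pull back a functional along `f`. -/
def pull {A X Y : D} (f : X ⟶ Y) : Module.Dual K (A ⟶ Y) →ₗ[K] Module.Dual K (A ⟶ X) :=
  (Linear.rightComp K A f).dualMap

@[simp] lemma pull_apply {A X Y : D} (f : X ⟶ Y) (φ : Module.Dual K (A ⟶ Y)) (h : A ⟶ X) :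
    pull f φ h = φ (h ≫ f) := rfl

lemma pull_comp {A X Y Z : D} (f : X ⟶ Y) (g : Y ⟶ Z) (φ : Module.Dual K (A ⟶ Z)) :
    pull (f ≫ g) φ = pull f (pull g φ) := by
  ext h; simp

lemma pull_add {A X Y : D} (f g : X ⟶ Y) (φ : Module.Dual K (A ⟶ Y)) :
    pull (f + g) φ = pull f φ + pull g φ := by
  ext h; simp

lemma pull_sub {A X Y : D} (f g : X ⟶ Y) (φ : Module.Dual K (A ⟶ Y)) :
    pull (f - g) φ = pull f φ - pull g φ := by
  ext h; simp

lemma pull_smul {A X Y : D} (r : K) (f : X ⟶ Y) (φ : Module.Dual K (A ⟶ Y)) :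
    pull (r • f) φ = r • pull f φ := by
  ext h; simp

lemma pull_zero {A X Y : D} (φ : Module.Dual K (A ⟶ Y)) :
    pull (0 : X ⟶ Y) φ = 0 := by
  ext h; simp

lemma pull_id {A X : D} (φ : Module.Dual K (A ⟶ X)) : pull (𝟙 X) φ = φ := by
  ext h; simp

lemma pull_sum {A X Y : D} {ι : Type*} (s : Finset ι) (f : ι → (X ⟶ Y))
    (φ : Module.Dual K (A ⟶ Y)) :
    pull (∑ i ∈ s, f i) φ = ∑ i ∈ s, pull (f i) φ := by
  ext h; simp [Preadditive.comp_sum]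

/-- `f ↦ pull f β` as a linear map -/
def pullL {A Y : D} (X : D) (β : Module.Dual K (A ⟶ Y)) :
    (X ⟶ Y) →ₗ[K] Module.Dual K (A ⟶ X) where
  toFun f := pull f β
  map_add' f g := pull_add f g β
  map_smul' r f := pull_smul r f β

lemma pull_exact {A X Y Z : D} {f : X ⟶ Y} {g : Y ⟶ Z} (h : Ex f g)
    (φ : Module.Dual K (A ⟶ Y)) (hφ : pull f φ = 0) :
    ∃ ψ : Module.Dual K (A ⟶ Z), pull g ψ = φ := by
  have : φ ∈ LinearMap.range (Linear.rightComp K A g).dualMap := by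
    rw [LinearMap.range_dualMap_eq_dualAnnihilator_ker, Submodule.mem_dualAnnihilator]
    intro x hx
    obtain ⟨l, rfl⟩ := h.2.1 _ x hx
    exact LinearMap.congr_fun hφ l
  exact this

/-- surjectivity at `X` -/
def SurjAt {A B : D} (β : Module.Dual K (A ⟶ B)) (X : D) : Prop :=
  ∀ φ : Module.Dual K (A ⟶ X), ∃ f : X ⟶ B, pull f β = φ

lemma SurjAt.add {A B T W : D} {β : Module.Dual K (A ⟶ B)} (h : SurjAt β T) (hW : AddE T W) :
    SurjAt β W := by
  obtain ⟨n, i, p, e⟩ := hW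
  intro φ
  choose f hf using fun j => h (pull (p j) φ)
  refine ⟨∑ j, i j ≫ f j, ?_⟩
  rw [pull_sum]
  simp_rw [pull_comp, hf, ← pull_comp]
  rw [← pull_sum, e, pull_id]

/-- the map `j` kills the kernel of `β` at `X` -/
def KillAt {A B B' : D} (β : Module.Dual K (A ⟶ B)) (j : B ⟶ B') (X : D) : Prop :=
  ∀ f : X ⟶ B, pull f β = 0 → f ≫ j = 0

lemma KillAt.add {A B B' T W : D} {β : Module.Dual K (A ⟶ B)} {j : B ⟶ B'}
    (h : KillAt β j T) (hW : AddE T W) : KillAt β j W := by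
  obtain ⟨n, i, p, e⟩ := hW
  intro f hf
  have : f ≫ j = (∑ j, i j ≫ p j) ≫ f ≫ j := by rw [e, Category.id_comp]
  rw [this, Preadditive.sum_comp]
  refine Finset.sum_eq_zero fun l _ => ?_
  have := h (p l ≫ f) (by rw [pull_comp, hf, map_zero])
  simp only [Category.assoc] at this ⊢
  rw [this, comp_zero]

lemma SurjAt.of_map {A B B' X : D} {β : Module.Dual K (A ⟶ B)} {β' : Module.Dual K (A ⟶ B')}
    (j : B ⟶ B') (hj : pull j β' = β) (h : SurjAt β X) : SurjAt β' X := fun φ => by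
  obtain ⟨f, hf⟩ := h φ
  exact ⟨f ≫ j, by rw [pull_comp, hj, hf]⟩

/-- Every object has a two term resolution. -/
def Res (T T' : D) : Prop := ∀ X : D, ∃ (T1 T0 T1' T0' : D) (a : T1 ⟶ T0) (b : T0 ⟶ X)
  (c : X ⟶ T1') (d : T1' ⟶ T0'), AddE T T1 ∧ AddE T T0 ∧ AddE T' T1' ∧ AddE T' T0' ∧
    Ex a b ∧ Ex b c ∧ Ex c d

lemma kill_all {A T T' : D} (hres : Res T T') {B0 B1 B2 : D} {β0 : Module.Dual K (A ⟶ B0)}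
    {β1 : Module.Dual K (A ⟶ B1)} (j0 : B0 ⟶ B1) (j1 : B1 ⟶ B2)
    (h0 : pull j0 β1 = β0)
    (k0 : KillAt β0 j0 T) (k1 : KillAt β1 j1 T') (s1 : SurjAt β1 T') (X : D) :
    KillAt β0 (j0 ≫ j1) X := by
  obtain ⟨T1, T0, T1', T0', a, b, c, d, hT1, hT0, hT1', hT0', hab, hbc, hcd⟩ := hres X
  intro x hx
  have h1 := k0.add hT0 (b ≫ x) (by rw [pull_comp, hx, map_zero])
  rw [Category.assoc] at h1
  obtain ⟨y, hy⟩ := hbc.2.2 _ _ h1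
  have h2 : pull c (pull y β1) = 0 := by
    rw [← pull_comp, hy, pull_comp, h0, hx]
  obtain ⟨z, hz⟩ := pull_exact hcd _ h2
  obtain ⟨w, hw⟩ := s1.add hT0' z
  have h3 := k1.add hT1' (y - d ≫ w) (by
    rw [pull_sub, pull_comp, hw, hz, sub_self])
  have h4 : c ≫ (y - d ≫ w) = x ≫ j0 := by
    rw [Preadditive.comp_sub, hy, ← Category.assoc, hcd.1, zero_comp, sub_zero]
  rw [← Category.assoc, ← h4, Category.assoc, h3, comp_zero]

lemma surj_all {A T T' : D} (hres : Res T T') {B0 B1 : D} {β0 : Module.Dual K (A ⟶ B0)}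
    {β1 : Module.Dual K (A ⟶ B1)} (j0 : B0 ⟶ B1)
    (h0 : pull j0 β1 = β0)
    (k0 : KillAt β0 j0 T) (s0 : SurjAt β0 T) (s1 : SurjAt β1 T') (X : D) :
    SurjAt β1 X := by
  obtain ⟨T1, T0, T1', T0', a, b, c, d, hT1, hT0, hT1', hT0', hab, hbc, hcd⟩ := hres X
  intro ξ
  obtain ⟨x, hx⟩ := s0.add hT0 (pull b ξ)
  have h1 := k0.add hT1 (a ≫ x) (by
    rw [pull_comp, hx, ← pull_comp, hab.1, pull_zero])
  rw [Category.assoc] at h1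
  obtain ⟨y, hy⟩ := hab.2.2 _ _ h1
  have h2 : pull b (ξ - pull y β1) = 0 := by
    rw [map_sub, ← pull_comp, hy, pull_comp, h0, hx, sub_self]
  obtain ⟨z, hz⟩ := pull_exact hbc _ h2
  obtain ⟨w, hw⟩ := s1.add hT1' z
  refine ⟨y + c ≫ w, ?_⟩
  rw [pull_add, pull_comp, hw, hz]
  abel

variable [HasFiniteBiproducts D] [∀ X Y : D, FiniteDimensional K (X ⟶ Y)]

lemma exists_start1 (A T : D) :
    ∃ (B : D) (β : Module.Dual K (A ⟶ B)), SurjAt β T := by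
  classical
  let b := Module.finBasis K (Module.Dual K (A ⟶ T))
  let G : Fin (Module.finrank K (Module.Dual K (A ⟶ T))) → D := fun _ => T
  let f : ∀ i, T ⟶ ⨁ G := fun i => biproduct.ι G i
  have key : ∀ i, pull (f i) (∑ j, pull (biproduct.π G j) (b j)) = b i := by
    intro i
    rw [map_sum]
    simp_rw [← pull_comp]
    rw [Finset.sum_eq_single i]
    · have : f i ≫ biproduct.π G i = 𝟙 T := biproduct.ι_π_self G i
      rw [this, pull_id]
    · intro j _ hj
      have : f i ≫ biproduct.π G j = 0 := biproduct.ι_π_ne G hj.symm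
      rw [this, pull_zero]
    · simp
  refine ⟨⨁ G, ∑ j, pull (biproduct.π G j) (b j), fun φ => ⟨∑ i, b.repr φ i • f i, ?_⟩⟩
  rw [pull_sum]
  simp_rw [pull_smul, key]
  exact b.sum_repr φ

lemma exists_start (A T T' : D) :
    ∃ (B : D) (β : Module.Dual K (A ⟶ B)), SurjAt β T ∧ SurjAt β T' := by
  have := hasBinaryBiproducts_of_finite_biproducts D
  obtain ⟨B, β, h⟩ := exists_start1 (K := K) A T
  obtain ⟨B', β', h'⟩ := exists_start1 (K := K) A T'
  refine ⟨B ⊞ B', pull biprod.fst β + pull biprod.snd β', h.of_map biprod.inl ?_,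
    h'.of_map biprod.inr ?_⟩
  · rw [map_add, ← pull_comp, ← pull_comp, biprod.inl_fst, biprod.inl_snd, pull_id, pull_zero,
      add_zero]
  · rw [map_add, ← pull_comp, ← pull_comp, biprod.inr_fst, biprod.inr_snd, pull_id, pull_zero,
      zero_add]

lemma exists_step1 (hcone : ∀ (X Y : D) (f : X ⟶ Y), ∃ (Z : D) (g : Y ⟶ Z), Ex f g)
    {A : D} (T : D) {B : D} (β : Module.Dual K (A ⟶ B)) :
    ∃ (B' : D) (j : B ⟶ B') (β' : Module.Dual K (A ⟶ B')), pull j β' = β ∧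
      KillAt β j T := by
  classical
  let b := Module.finBasis K (LinearMap.ker (pullL (K := K) T β))
  let G : Fin (Module.finrank K (LinearMap.ker (pullL (K := K) T β))) → D := fun _ => T
  let c : ∀ i, G i ⟶ B := fun i => (b i).1
  have hc : ∀ i, pull (c i) β = 0 := fun i => (b i).2
  obtain ⟨B', j, hj⟩ := hcone _ _ (biproduct.desc c)
  have hcj : ∀ i, (b i).1 ≫ j = 0 := fun i => by
    have := biproduct.ι G i ≫= hj.1
    simpa using this
  obtain ⟨β', hβ'⟩ := pull_exact hj β (by
    have : biproduct.desc c = ∑ i, biproduct.π G i ≫ c i := biproduct.desc_eq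
    rw [this, pull_sum]
    exact Finset.sum_eq_zero fun i _ => by rw [pull_comp, hc, map_zero])
  refine ⟨B', j, β', hβ', fun f hf => ?_⟩
  have h1 : f = ∑ i, b.repr ⟨f, hf⟩ i • (b i).1 := by
    have := congrArg Subtype.val (b.sum_repr ⟨f, hf⟩)
    simp only [Submodule.coe_sum, Submodule.coe_smul] at this
    exact this.symm
  rw [h1, Preadditive.sum_comp]
  refine Finset.sum_eq_zero fun i _ => ?_
  rw [Linear.smul_comp, hcj, smul_zero]

lemma exists_step (hcone : ∀ (X Y : D) (f : X ⟶ Y), ∃ (Z : D) (g : Y ⟶ Z), Ex f g)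
    {A : D} (T T' : D) {B : D} (β : Module.Dual K (A ⟶ B)) :
    ∃ (B' : D) (j : B ⟶ B') (β' : Module.Dual K (A ⟶ B')), pull j β' = β ∧
      KillAt β j T ∧ KillAt β j T' := by
  obtain ⟨B1, j1, β1, h1, k1⟩ := exists_step1 hcone T β
  obtain ⟨B2, j2, β2, h2, k2⟩ := exists_step1 hcone T' β1
  refine ⟨B2, j1 ≫ j2, β2, by rw [pull_comp, h2, h1], fun f hf => ?_, fun f hf => ?_⟩
  · rw [← Category.assoc, k1 f hf, zero_comp]
  · rw [← Category.assoc]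
    exact k2 _ (by rw [pull_comp, h1, hf])

theorem representable (hcone : ∀ (X Y : D) (f : X ⟶ Y), ∃ (Z : D) (g : Y ⟶ Z), Ex f g)
    (T T' : D) (hres : Res T T')
    (hsplit : ∀ (X : D) (e : X ⟶ X), e ≫ e = e →
      ∃ (Y : D) (i : Y ⟶ X) (p : X ⟶ Y), i ≫ p = 𝟙 Y ∧ p ≫ i = e) (A : D) :
    ∃ (S : D) (β : Module.Dual K (A ⟶ S)), ∀ X, Function.Bijective (pullL (K := K) X β) := by
  obtain ⟨B0, β0, s0, s0'⟩ := exists_start (K := K) A T T'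
  obtain ⟨B1, j0, β1, h0, k0, k0'⟩ := exists_step hcone T T' β0
  obtain ⟨B2, j1, β2, h1, k1, k1'⟩ := exists_step hcone T T' β1
  obtain ⟨B3, j2, β3, h2, k2, k2'⟩ := exists_step hcone T T' β2
  have s1' := s0'.of_map j0 h0
  have s2' := s1'.of_map j1 h1
  have sX := surj_all hres j0 h0 k0 s0 s1'
  have kX := kill_all hres j1 j2 h1 k1 k2' s2'
  have hj : pull (j1 ≫ j2) β3 = β1 := by rw [pull_comp, h2, h1]
  generalize j1 ≫ j2 = j at hj kX
  obtain ⟨u, hu⟩ := sX B3 β3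
  have he : (u ≫ j) ≫ (u ≫ j) = u ≫ j := by
    have := kX B3 (u ≫ j ≫ u - u) (by
      rw [pull_sub, pull_comp, pull_comp, hu, hj, hu, sub_self])
    rw [Preadditive.sub_comp, sub_eq_zero] at this
    simpa using this
  obtain ⟨S, i, p, hip, hpi⟩ := hsplit B3 (u ≫ j) he
  have hp : pull p (pull i β3) = β3 := by
    rw [← pull_comp, hpi, pull_comp, hj, hu]
  refine ⟨S, pull i β3, fun X => ⟨?_, fun φ => ?_⟩⟩
  · rw [← LinearMap.ker_eq_bot, LinearMap.ker_eq_bot']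
    intro g hg
    have hg : pull g (pull i β3) = 0 := hg
    have := kX X (g ≫ i ≫ u) (by rw [pull_comp, pull_comp, hu, hg])
    have h5 : g = (g ≫ i ≫ u) ≫ j ≫ p := by
      calc g = g ≫ (i ≫ p) ≫ (i ≫ p) := by rw [hip]; simp
        _ = g ≫ i ≫ (p ≫ i) ≫ p := by simp
        _ = _ := by rw [hpi]; simp
    rw [h5, ← Category.assoc, this, zero_comp]
  · obtain ⟨f, hf⟩ := sX X φ
    refine ⟨f ≫ j ≫ p, ?_⟩
    change pull (f ≫ j ≫ p) (pull i β3) = φ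
    rw [pull_comp, pull_comp, hp, hj, hf]

end Generic
section Split

universe v' u'

variable {D : Type u'} [Category.{v'} D] [Preadditive D]

/-- idempotents of `X` split, together with their complements -/
def Sp (X : D) : Prop := ∀ e : X ⟶ X, e ≫ e = e →
  ∃ (Y Z : D) (i : Y ⟶ X) (p : X ⟶ Y) (i' : Z ⟶ X) (p' : X ⟶ Z),
    i ≫ p = 𝟙 Y ∧ p ≫ i = e ∧ i' ≫ p' = 𝟙 Z ∧ p' ≫ i' = 𝟙 X - e

lemma Sp.of_iso {X X' : D} (h : Sp X') (α : X ≅ X') : Sp X := by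
  intro e he
  obtain ⟨Y, Z, i, p, i', p', h1, h2, h3, h4⟩ := h (α.inv ≫ e ≫ α.hom) (by
    simp only [Category.assoc, Iso.hom_inv_id_assoc]
    rw [← Category.assoc e e, he])
  refine ⟨Y, Z, i ≫ α.inv, α.hom ≫ p, i' ≫ α.inv, α.hom ≫ p', by simpa, ?_, by simpa, ?_⟩
  · have : (α.hom ≫ p) ≫ i ≫ α.inv = α.hom ≫ (p ≫ i) ≫ α.inv := by simp
    rw [this, h2]; simp
  · have : (α.hom ≫ p') ≫ i' ≫ α.inv = α.hom ≫ (p' ≫ i') ≫ α.inv := by simp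
    rw [this, h4]; simp

lemma split_step [HasBinaryBiproducts D] {X X1 X' : D} (a : X1 ⟶ X) (q : X ⟶ X1) (ι' : X' ⟶ X) (q' : X ⟶ X')
    (h1 : a ≫ q = 𝟙 X1) (h2 : ι' ≫ q = 0) (h3 : a ≫ q' = 0) (h4 : ι' ≫ q' = 𝟙 X')
    (h5 : q ≫ a + q' ≫ ι' = 𝟙 X) (hX' : Sp X') (e : X ⟶ X) (he : e ≫ e = e) (hae : a ≫ e = a) :
    ∃ (Y Z : D) (i : Y ⟶ X) (p : X ⟶ Y) (i' : Z ⟶ X) (p' : X ⟶ Z),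
    i ≫ p = 𝟙 Y ∧ p ≫ i = e ∧ i' ≫ p' = 𝟙 Z ∧ p' ≫ i' = 𝟙 X - e := by
  obtain ⟨c, hc⟩ : ∃ c, c = ι' ≫ e ≫ q := ⟨_, rfl⟩
  obtain ⟨f, hf⟩ : ∃ f, f = ι' ≫ e ≫ q' := ⟨_, rfl⟩
  have h5' : q' ≫ ι' = 𝟙 X - q ≫ a := by rw [← h5]; abel
  have hι'e : ι' ≫ e = c ≫ a + f ≫ ι' := by
    calc ι' ≫ e = ι' ≫ e ≫ (q ≫ a + q' ≫ ι') := by rw [h5, Category.comp_id]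
      _ = _ := by rw [hc, hf]; simp
  have hee : e = q ≫ a + q' ≫ c ≫ a + q' ≫ f ≫ ι' := by
    calc e = (q ≫ a + q' ≫ ι') ≫ e := by rw [h5, Category.id_comp]
      _ = q ≫ a ≫ e + q' ≫ ι' ≫ e := by simp
      _ = _ := by rw [hae, hι'e]; simp [add_assoc]
  have hmid : ι' ≫ e ≫ (q' ≫ ι') ≫ e = ι' ≫ e - ι' ≫ e ≫ q ≫ a := by
    rw [h5']
    simp only [Preadditive.sub_comp, Preadditive.comp_sub, Category.id_comp, Category.assoc, hae, he]
  have hff : f ≫ f = f := by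
    have := hmid =≫ q'
    simp only [Preadditive.sub_comp, Category.assoc, h3, comp_zero, sub_zero] at this
    rw [hf]; simpa using this
  have hfc : f ≫ c = 0 := by
    have := hmid =≫ q
    simp only [Preadditive.sub_comp, Category.assoc, h1, Category.comp_id, sub_self] at this
    rw [hf, hc]; simpa using this
  obtain ⟨Y, Z, i, p, i', p', g1, g2, g3, g4⟩ := hX' f hff
  have hic : i ≫ c = 0 := by
    calc i ≫ c = (i ≫ p) ≫ i ≫ c := by rw [g1, Category.id_comp]
      _ = i ≫ (p ≫ i) ≫ c := by simp
      _ = 0 := by rw [g2, hfc, comp_zero]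
  refine ⟨X1 ⊞ Y, Z, biprod.desc a (i ≫ ι'), biprod.lift (q + q' ≫ c) (q' ≫ p),
    i' ≫ (ι' - c ≫ a), q' ≫ p', ?_, ?_, ?_, ?_⟩
  · ext
    · simp [h1, reassoc_of% h3]
    · simp [reassoc_of% h3]
    · simp [h2, reassoc_of% h4, hic]
    · simp [reassoc_of% h4, g1]
  · rw [biprod.lift_desc]
    have : (q' ≫ p) ≫ i ≫ ι' = q' ≫ (p ≫ i) ≫ ι' := by simp
    rw [this, g2]
    conv_rhs => rw [hee]
    simp
  · simp only [Preadditive.comp_sub, Preadditive.sub_comp, Category.assoc, reassoc_of% h4,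
      reassoc_of% h3, g3, zero_comp, comp_zero, sub_zero]
  · have : (q' ≫ p') ≫ i' ≫ (ι' - c ≫ a) = q' ≫ (p' ≫ i') ≫ (ι' - c ≫ a) := by simp
    rw [this, g4]
    have hfca : f ≫ c ≫ a = 0 := by rw [← Category.assoc, hfc, zero_comp]
    conv_rhs => rw [hee, ← h5]
    simp only [Preadditive.comp_sub, Preadditive.sub_comp, Category.id_comp, hfca, comp_zero]
    abel

lemma split_local [HasBinaryBiproducts D] {X X1 X' : D} (a : X1 ⟶ X) (q : X ⟶ X1) (ι' : X' ⟶ X) (q' : X ⟶ X')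
    (h1 : a ≫ q = 𝟙 X1) (h2 : ι' ≫ q = 0) (h3 : a ≫ q' = 0) (h4 : ι' ≫ q' = 𝟙 X')
    (h5 : q ≫ a + q' ≫ ι' = 𝟙 X) (hX' : Sp X') (e : X ⟶ X) (he : e ≫ e = e)
    (hu : IsUnit (M := End X1) (a ≫ e ≫ q)) :
    ∃ (Y Z : D) (i : Y ⟶ X) (p : X ⟶ Y) (i' : Z ⟶ X) (p' : X ⟶ Z),
    i ≫ p = 𝟙 Y ∧ p ≫ i = e ∧ i' ≫ p' = 𝟙 Z ∧ p' ≫ i' = 𝟙 X - e := by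
  obtain ⟨v, hv1, hv2⟩ : ∃ v : X1 ⟶ X1, a ≫ e ≫ q ≫ v = 𝟙 X1 ∧ v ≫ a ≫ e ≫ q = 𝟙 X1 := by
    obtain ⟨w, hw⟩ := hu
    refine ⟨(↑w⁻¹ : End X1), ?_, ?_⟩
    · have : (↑w⁻¹ : End X1) * (w : End X1) = 1 := w.inv_mul
      rw [hw] at this
      simpa [End.mul_def] using this
    · have : (w : End X1) * (↑w⁻¹ : End X1) = 1 := w.mul_inv
      rw [hw] at this
      simpa [End.mul_def] using this
  have h5' : q' ≫ ι' = 𝟙 X - q ≫ a := by rw [← h5]; abel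
  refine split_step (a ≫ e) (q ≫ v) ι' (q' - q ≫ v ≫ a ≫ e ≫ q') ?_ ?_ ?_ ?_ ?_ hX' e he ?_
  · simpa using hv1
  · rw [reassoc_of% h2, zero_comp]
  · simp only [Preadditive.comp_sub, Category.assoc]
    have := hv1 =≫ (a ≫ e ≫ q')
    simp only [Category.assoc, Category.id_comp] at this
    rw [this, sub_self]
  · simp only [Preadditive.comp_sub, h4, reassoc_of% h2, zero_comp, sub_zero]
  · simp only [Preadditive.sub_comp, Category.assoc, h5', Preadditive.comp_sub, Category.comp_id]
    have := q ≫= hv2 =≫ a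
    simp only [Category.assoc, Category.id_comp] at this
    rw [this]
    abel
  · rw [Category.assoc, he]

lemma Sp.of_local [HasBinaryBiproducts D] {X X1 X' : D} (a : X1 ⟶ X) (q : X ⟶ X1) (ι' : X' ⟶ X) (q' : X ⟶ X')
    (h1 : a ≫ q = 𝟙 X1) (h2 : ι' ≫ q = 0) (h3 : a ≫ q' = 0) (h4 : ι' ≫ q' = 𝟙 X')
    (h5 : q ≫ a + q' ≫ ι' = 𝟙 X) (hX' : Sp X') (hloc : IsLocalRing (End X1)) : Sp X := by
  intro e he
  rcases IsLocalRing.isUnit_or_isUnit_of_add_one (R := End X1) (a := (a ≫ e ≫ q : X1 ⟶ X1))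
    (b := (a ≫ (𝟙 X - e) ≫ q : X1 ⟶ X1)) (by
      change a ≫ e ≫ q + a ≫ (𝟙 X - e) ≫ q = 𝟙 X1
      simp [h1]) with hu | hu
  · exact split_local a q ι' q' h1 h2 h3 h4 h5 hX' e he hu
  · obtain ⟨Y, Z, i, p, i', p', g1, g2, g3, g4⟩ :=
      split_local a q ι' q' h1 h2 h3 h4 h5 hX' (𝟙 X - e) (by simp [he]) hu
    exact ⟨Z, Y, i', p', i, p, g3, by simpa using g4, g1, g2⟩

lemma Sp.biproduct [HasFiniteBiproducts D] : ∀ (n : ℕ) (f : Fin n → D),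
    (∀ i, IsLocalRing (End (f i))) → Sp (⨁ f)
  | 0, f, _ => by
    intro e _
    have h : ∀ g h : (⨁ f) ⟶ (⨁ f), g = h := fun g h => by
      apply biproduct.hom_ext
      intro j
      exact j.elim0
    exact ⟨_, _, 𝟙 _, 𝟙 _, 𝟙 _, 𝟙 _, h _ _, h _ _, h _ _, h _ _⟩
  | n + 1, f, hf => by
    have := hasBinaryBiproducts_of_finite_biproducts D
    have ih := Sp.biproduct n (fun i => f i.succ) (fun i => hf i.succ)
    refine Sp.of_local (biproduct.ι f 0) (biproduct.π f 0)
      (biproduct.desc (fun j : Fin n => biproduct.ι f j.succ))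
      (biproduct.lift (fun j : Fin n => biproduct.π f j.succ)) ?_ ?_ ?_ ?_ ?_ ih (hf 0)
    · simp
    · ext j
      simp [biproduct.ι_π_ne _ (Fin.succ_ne_zero j)]
    · ext j
      simp [biproduct.ι_π_ne _ (Fin.succ_ne_zero j).symm]
    · ext i j
      by_cases h : i = j
      · subst h; simp
      · have h' : i.succ ≠ j.succ := fun hh => h (Fin.succ_injective _ hh)
        simp [biproduct.ι_π_ne _ h'.symm, biproduct.ι_π_ne _ (Ne.symm h)]
    · rw [biproduct.lift_desc]
      have := biproduct.total (f := f)
      rw [Fin.sum_univ_succ] at this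
      exact this

end Split
section Op

universe v' u' w'

variable (K : Type w') [Field K] (D : Type u') [Category.{v'} D] [Preadditive D] [Linear K D]

/-- the linear structure on the opposite category -/
@[reducible] def opLinear : Linear K Dᵒᵖ where
  homModule X Y :=
    { smul := fun r f => (r • f.unop).op
      one_smul := fun f => Quiver.Hom.unop_inj (one_smul K f.unop)
      mul_smul := fun r s f => Quiver.Hom.unop_inj (mul_smul r s f.unop)
      smul_zero := fun r => Quiver.Hom.unop_inj (smul_zero r)
      smul_add := fun r f g => Quiver.Hom.unop_inj (smul_add r f.unop g.unop)
      add_smul := fun r s f => Quiver.Hom.unop_inj (add_smul r s f.unop)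
      zero_smul := fun f => Quiver.Hom.unop_inj (zero_smul K f.unop) }
  smul_comp X Y Z r f g := Quiver.Hom.unop_inj (Linear.comp_smul (R := K) _ _ _ g.unop r f.unop)
  comp_smul X Y Z f r g := Quiver.Hom.unop_inj (Linear.smul_comp (R := K) _ _ _ r g.unop f.unop)

attribute [local instance] opLinear

/-- `op` as a linear equivalence -/
def opEquivL (X Y : D) : (X ⟶ Y) ≃ₗ[K] (Opposite.op Y ⟶ Opposite.op X) where
  toFun f := f.op
  invFun f := f.unop
  map_add' _ _ := rfl
  map_smul' _ _ := rfl
  left_inv _ := rfl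
  right_inv _ := rfl

lemma Ex.op {X Y Z : D} {f : X ⟶ Y} {g : Y ⟶ Z} (h : Ex f g) : Ex g.op f.op := by
  refine ⟨?_, fun W x hx => ?_, fun W x hx => ?_⟩
  · rw [← op_comp, h.1]; rfl
  · obtain ⟨l, hl⟩ := h.2.2 _ x.unop (Quiver.Hom.op_inj hx)
    exact ⟨l.op, Quiver.Hom.unop_inj hl⟩
  · obtain ⟨l, hl⟩ := h.2.1 _ x.unop (Quiver.Hom.op_inj hx)
    exact ⟨l.op, Quiver.Hom.unop_inj hl⟩

lemma AddE.op {T W : D} (h : AddE T W) : AddE (Opposite.op T) (Opposite.op W) := by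
  obtain ⟨n, i, p, e⟩ := h
  refine ⟨n, fun j => (p j).op, fun j => (i j).op, ?_⟩
  simp_rw [← op_comp]
  rw [← op_sum, e]; rfl

variable {K D}

theorem corepresentable [HasFiniteBiproducts D] [∀ X Y : D, FiniteDimensional K (X ⟶ Y)]
    (hcone : ∀ (Y Z : D) (g : Y ⟶ Z), ∃ (X : D) (f : X ⟶ Y), Ex f g)
    (T T' : D)
    (hres : ∀ X : D, ∃ (T0' T1' T0 T1 : D) (d : T0' ⟶ T1') (c : T1' ⟶ X) (b : X ⟶ T0)
      (a : T0 ⟶ T1), AddE T T1 ∧ AddE T T0 ∧ AddE T' T1' ∧ AddE T' T0' ∧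
      Ex d c ∧ Ex c b ∧ Ex b a)
    (hsplit : ∀ (X : D) (e : X ⟶ X), e ≫ e = e →
      ∃ (Y : D) (i : Y ⟶ X) (p : X ⟶ Y), i ≫ p = 𝟙 Y ∧ p ≫ i = e) (A : D) :
    ∃ (S : D) (γ : Module.Dual K (S ⟶ A)), ∀ X (φ : Module.Dual K (X ⟶ A)),
      ∃! f : S ⟶ X, ∀ h : X ⟶ A, γ (f ≫ h) = φ h := by
  have : HasFiniteBiproducts Dᵒᵖ := HasFiniteBiproducts.of_hasFiniteProducts
  have : ∀ X Y : Dᵒᵖ, FiniteDimensional K (X ⟶ Y) := fun X Y =>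
    (opEquivL K D Y.unop X.unop).finiteDimensional
  obtain ⟨S, β, h⟩ := representable (K := K) (D := Dᵒᵖ) (fun X Y f => by
      obtain ⟨Z, g, hg⟩ := hcone _ _ f.unop
      exact ⟨_, g.op, hg.op⟩) (Opposite.op T) (Opposite.op T') (fun X => by
      obtain ⟨T0', T1', T0, T1, d, c, b, a, h1, h2, h3, h4, h5, h6, h7⟩ := hres X.unop
      exact ⟨_, _, _, _, a.op, b.op, c.op, d.op, h1.op, h2.op, h3.op, h4.op, h7.op, h6.op,
        h5.op⟩) (fun X e he => by
      obtain ⟨Y, i, p, h1, h2⟩ := hsplit X.unop e.unop (Quiver.Hom.op_inj he)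
      exact ⟨_, p.op, i.op, Quiver.Hom.unop_inj h1, Quiver.Hom.unop_inj h2⟩) (Opposite.op A)
  refine ⟨S.unop, β.comp (opEquivL K D S.unop A).toLinearMap, fun X φ => ?_⟩
  obtain ⟨f, hf⟩ := (h (Opposite.op X)).2 (φ.comp (opEquivL K D X A).symm.toLinearMap)
  refine ⟨f.unop, fun x => LinearMap.congr_fun hf x.op, fun g hg => ?_⟩
  have : g.op = f := (h (Opposite.op X)).1 (by
    rw [hf]
    refine LinearMap.ext fun x => ?_
    exact hg x.unop)
  rw [← this]; rfl

end Op

section Serre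

universe v' u' w'

variable {K : Type w'} [Field K] {D : Type u'} [Category.{v'} D] [Preadditive D] [Linear K D]
  [∀ X Y : D, FiniteDimensional K (X ⟶ Y)]

lemma perf_flip {V W : Type*} [AddCommGroup V] [Module K V] [AddCommGroup W] [Module K W]
    [FiniteDimensional K V] [FiniteDimensional K W] (p : V →ₗ[K] W →ₗ[K] K)
    (h : Function.Bijective p) : Function.Bijective p.flip :=
  (LinearMap.IsPerfPair.of_bijective p h).bijective_right

theorem serre (hr : ∀ A : D, ∃ (S : D) (β : Module.Dual K (A ⟶ S)),
      ∀ X, Function.Bijective (pullL (K := K) X β))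
    (hc : ∀ A : D, ∃ (S : D) (γ : Module.Dual K (S ⟶ A)), ∀ X (φ : Module.Dual K (X ⟶ A)),
      ∃! f : S ⟶ X, ∀ h : X ⟶ A, γ (f ≫ h) = φ h) :
    ∃ S : D ⥤ D, S.IsEquivalence ∧
      (∀ {A B : D} (f g : A ⟶ B), S.map (f + g) = S.map f + S.map g) ∧
      (∀ {A B : D} (r : K) (f : A ⟶ B), S.map (r • f) = r • S.map f) ∧
      ∃ η : ∀ A B : D, (A ⟶ B) ≃ₗ[K] Module.Dual K (B ⟶ S.obj A),
        (∀ (A B B' : D) (f : A ⟶ B) (g : B ⟶ B') (φ : B' ⟶ S.obj A),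
          η A B' (f ≫ g) φ = η A B f (g ≫ φ)) ∧
        (∀ (A' A B : D) (a : A' ⟶ A) (f : A ⟶ B) (φ : B ⟶ S.obj A'),
          η A' B (a ≫ f) φ = η A B f (φ ≫ S.map a)) := by
  choose S β hβ using hr
  have hinj : ∀ {A X : D} {f g : X ⟶ S A}, (∀ h : A ⟶ X, β A (h ≫ f) = β A (h ≫ g)) → f = g :=
    fun {A X f g} h => (hβ A X).1 (LinearMap.ext h)
  have hm : ∀ {A' A : D} (a : A' ⟶ A), ∃ s : S A' ⟶ S A, ∀ h : A ⟶ S A',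
      β A (h ≫ s) = β A' (a ≫ h) := fun {A' A} a => by
    obtain ⟨s, hs⟩ := (hβ A (S A')).2 ((β A').comp (Linear.leftComp K (S A') a))
    exact ⟨s, fun h => LinearMap.congr_fun hs h⟩
  choose m hm using @hm
  have hm' : ∀ {A' A X : D} (a : A' ⟶ A) (f : A ⟶ X) (φ : X ⟶ S A'),
      β A (f ≫ φ ≫ m a) = β A' (a ≫ f ≫ φ) := fun a f φ => by
    rw [← Category.assoc, hm]
  have hfl : ∀ A X, Function.Bijective (pullL (K := K) X (β A)).flip := fun A X =>
    perf_flip _ (hβ A X)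
  let F : D ⥤ D :=
    { obj := S
      map := fun a => m a
      map_id := fun A => hinj fun h => by rw [hm]; simp
      map_comp := fun a b => hinj fun h => by
        rw [hm, ← Category.assoc, hm, ← Category.assoc, hm]; simp }
  refine ⟨F, ?_, ?_, ?_, fun A B => LinearEquiv.ofBijective _ (hfl A B), ?_, ?_⟩
  · have : F.Full := ⟨fun {A' A} s => by
      obtain ⟨a, ha⟩ := (hfl A' A).2 ((β A).comp (Linear.rightComp K A s))
      refine ⟨a, hinj fun h => ?_⟩
      change β A (h ≫ m a) = _
      rw [hm]
      exact LinearMap.congr_fun ha h⟩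
    have : F.Faithful := ⟨fun {A' A} a b hab => by
      refine (hfl A' A).1 (LinearMap.ext fun h => ?_)
      change β A' (a ≫ h) = β A' (b ≫ h)
      have hab : m a = m b := hab
      rw [← hm a h, ← hm b h, hab]⟩
    have : F.EssSurj := ⟨fun X => by
      obtain ⟨Y, γ, hγ⟩ := hc X
      have hY : ∀ W, Function.Bijective (pullL (K := K) W γ) := fun W => by
        have h1 : Function.Bijective (pullL (K := K) W γ).flip := by
          refine ⟨fun f g hfg => ?_, fun φ => ?_⟩
          · obtain ⟨l, _, hl⟩ := hγ W ((pullL (K := K) W γ).flip g)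
            exact (hl f fun h => LinearMap.congr_fun hfg h).trans (hl g fun h => rfl).symm
          · obtain ⟨l, hl, _⟩ := hγ W φ
            exact ⟨l, LinearMap.ext hl⟩
        exact perf_flip _ h1
      obtain ⟨s, hs⟩ := (hβ Y X).2 γ
      obtain ⟨t, ht⟩ := (hY (S Y)).2 (β Y)
      have hs : pull s (β Y) = γ := hs
      have ht : pull t γ = β Y := ht
      refine ⟨Y, ⟨⟨t, s, ?_, ?_⟩⟩⟩
      · refine (hβ Y (S Y)).1 ?_
        change pull (t ≫ s) (β Y) = pull (𝟙 _) (β Y)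
        rw [pull_comp, hs, ht, pull_id]
      · refine (hY X).1 ?_
        change pull (s ≫ t) γ = pull (𝟙 _) γ
        rw [pull_comp, ht, hs, pull_id]⟩
    exact { }
  · intro A B f g
    refine hinj fun h => ?_
    change β B (h ≫ m (f + g)) = β B (h ≫ (m f + m g))
    simp [hm]
  · intro A B r f
    refine hinj fun h => ?_
    change β B (h ≫ m (r • f)) = β B (h ≫ (r • m f))
    simp [hm]
  · intro A B B' f g φ
    change β A ((f ≫ g) ≫ φ) = β A (f ≫ g ≫ φ)
    rw [Category.assoc]
  · intro A' A B a f φ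
    change β A' ((a ≫ f) ≫ φ) = β A (f ≫ φ ≫ m a)
    rw [hm', Category.assoc]

end Serre

section Tri

universe v' u' w'

variable {D : Type u'} [Category.{v'} D] [Preadditive D]
  [HasZeroObject D] [HasShift D ℤ]
  [∀ n : ℤ, (shiftFunctor D n).Additive] [Pretriangulated D]

lemma Ex.of_tri (Δ : Triangle D) (h : Δ ∈ distTriang D) : Ex Δ.mor₁ Δ.mor₂ :=
  ⟨comp_distTriang_mor_zero₁₂ _ h,
    fun W x hx => (Triangle.coyoneda_exact₂ Δ h x hx).imp fun _ h => h.symm,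
    fun W x hx => (Triangle.yoneda_exact₂ Δ h x hx).imp fun _ h => h.symm⟩

lemma AddE.shift {T W : D} (h : AddE T W) (m : ℤ) : AddE (T⟦m⟧) (W⟦m⟧) := by
  obtain ⟨n, i, p, e⟩ := h
  refine ⟨n, fun j => (i j)⟦m⟧', fun j => (p j)⟦m⟧', ?_⟩
  simp_rw [← Functor.map_comp]
  rw [← Functor.map_sum, e, CategoryTheory.Functor.map_id]

variable [HasFiniteBiproducts D]

lemma AddE.of_mem {T W : D} (h : W ∈ addSet D T) : AddE T W := by
  obtain ⟨n, i, p, e⟩ := h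
  refine ⟨n, fun j => i ≫ biproduct.π _ j, fun j => biproduct.ι (fun _ : Fin n => T) j ≫ p, ?_⟩
  have : i ≫ (∑ j, biproduct.π (fun _ : Fin n => T) j ≫ biproduct.ι (fun _ : Fin n => T) j) ≫ p
      = 𝟙 W := by rw [biproduct.total, Category.id_comp, e]
  rw [Preadditive.sum_comp, Preadditive.comp_sum] at this
  simpa only [Category.assoc] using this

lemma AddE.pow (T : D) (n : ℕ) : AddE T (⨁ (fun _ : Fin n => T)) :=
  ⟨n, fun j => biproduct.π _ j, fun j => biproduct.ι (fun _ : Fin n => T) j, biproduct.total⟩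

lemma rigid {T : D} (hT : ClusterTilting D T) (f : T ⟶ T⟦(1 : ℤ)⟧) : f = 0 := by
  have h : T ∈ addSet D T := ⟨1, biproduct.lift fun _ => 𝟙 T, biproduct.desc fun _ => 𝟙 T, by
    simp [biproduct.lift_desc]⟩
  exact (hT T).1.1 h f

lemma rigid_left {T W : D} (hT : ClusterTilting D T) (hW : AddE T W) (f : W ⟶ T⟦(1 : ℤ)⟧) :
    f = 0 := by
  obtain ⟨n, i, p, e⟩ := hW
  rw [← Category.id_comp f, ← e, Preadditive.sum_comp]
  exact Finset.sum_eq_zero fun j _ => by rw [Category.assoc, rigid hT (p j ≫ f), comp_zero]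

lemma rigid_right {T W : D} (hT : ClusterTilting D T) (hW : AddE T W) (f : T ⟶ W⟦(1 : ℤ)⟧) :
    f = 0 := by
  obtain ⟨n, i, p, e⟩ := hW.shift 1
  rw [← Category.comp_id f, ← e, Preadditive.comp_sum]
  exact Finset.sum_eq_zero fun j _ => by rw [← Category.assoc, rigid hT (f ≫ i j), zero_comp]

lemma right_approx (K : Type w') [Field K] [Linear K D] [∀ X Y : D, FiniteDimensional K (X ⟶ Y)]
    (T X : D) : ∃ (n : ℕ) (b : (⨁ fun _ : Fin n => T) ⟶ X),
    ∀ f : T ⟶ X, ∃ g, g ≫ b = f := by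
  let bs := Module.finBasis K (T ⟶ X)
  refine ⟨_, biproduct.desc bs, fun f => ⟨∑ j, bs.repr f j • biproduct.ι (fun _ => T) j, ?_⟩⟩
  rw [Preadditive.sum_comp]
  simp_rw [Linear.smul_comp, biproduct.ι_desc]
  exact bs.sum_repr f

lemma left_approx (K : Type w') [Field K] [Linear K D] [∀ X Y : D, FiniteDimensional K (X ⟶ Y)]
    (T X : D) : ∃ (n : ℕ) (b : X ⟶ (⨁ fun _ : Fin n => T)),
    ∀ f : X ⟶ T, ∃ g, b ≫ g = f := by
  let bs := Module.finBasis K (X ⟶ T)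
  refine ⟨_, biproduct.lift bs, fun f => ⟨∑ j, bs.repr f j • biproduct.π (fun _ => T) j, ?_⟩⟩
  rw [Preadditive.comp_sum]
  simp_rw [Linear.comp_smul, biproduct.lift_π]
  exact bs.sum_repr f

lemma res (K : Type w') [Field K] [Linear K D] [∀ X Y : D, FiniteDimensional K (X ⟶ Y)]
    {T : D} (hT : ClusterTilting D T) : Res T (T⟦(1 : ℤ)⟧) := by
  intro X
  obtain ⟨n, b, hb⟩ := right_approx K T X
  obtain ⟨Y, a, c, hΔ⟩ := distinguished_cocone_triangle₁ b
  have h1 := Ex.of_tri _ hΔ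
  have h2 := Ex.of_tri _ (rot_of_distTriang _ hΔ)
  have h3 := Ex.of_tri _ (rot_of_distTriang _ (rot_of_distTriang _ hΔ))
  have hY : AddE T Y := AddE.of_mem ((hT Y).1.2 fun f => by
    obtain ⟨l, hl⟩ : ∃ l : T ⟶ X, l ≫ c = f := h3.2.1 _ f (rigid_right hT (AddE.pow T n) _)
    obtain ⟨g, hg⟩ := hb l
    rw [← hl, ← hg, Category.assoc]
    have : b ≫ c = 0 := h2.1
    rw [this, comp_zero])
  exact ⟨_, _, _, _, _, _, _, _, hY, AddE.pow T n, hY.shift 1, (AddE.pow T n).shift 1, h1, h2, h3⟩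

lemma cores (K : Type w') [Field K] [Linear K D] [∀ X Y : D, FiniteDimensional K (X ⟶ Y)]
    {T : D} (hT : ClusterTilting D T) (X : D) :
    ∃ (T0' T1' T0 T1 : D) (d : T0' ⟶ T1') (c : T1' ⟶ X) (b : X ⟶ T0)
      (a : T0 ⟶ T1), AddE T T1 ∧ AddE T T0 ∧ AddE (T⟦(-1 : ℤ)⟧) T1' ∧ AddE (T⟦(-1 : ℤ)⟧) T0' ∧
      Ex d c ∧ Ex c b ∧ Ex b a := by
  obtain ⟨n, b, hb⟩ := left_approx K T X
  obtain ⟨Z, a, c, hΔ⟩ := distinguished_cocone_triangle b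
  have h1 := Ex.of_tri _ hΔ
  have h2 := Ex.of_tri _ (inv_rot_of_distTriang _ hΔ)
  have h3 := Ex.of_tri _ (inv_rot_of_distTriang _ (inv_rot_of_distTriang _ hΔ))
  have r1 := Ex.of_tri _ (rot_of_distTriang _ hΔ)
  have hZ : AddE T Z := AddE.of_mem ((hT Z).2.2 fun f => by
    obtain ⟨l, hl⟩ := r1.2.2 _ f (rigid_left hT (AddE.pow T n) _)
    obtain ⟨l', rfl⟩ := (shiftFunctor D (1 : ℤ)).map_surjective l
    obtain ⟨g, hg⟩ := hb l'
    change c ≫ l'⟦(1 : ℤ)⟧' = f at hl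
    rw [← hl, ← hg, Functor.map_comp, ← Category.assoc]
    have : c ≫ b⟦(1 : ℤ)⟧' = 0 := comp_distTriang_mor_zero₃₁ _ hΔ
    rw [this, zero_comp])
  exact ⟨_, _, _, _, _, _, _, _, hZ, AddE.pow T n, hZ.shift (-1), (AddE.pow T n).shift (-1),
    h3, h2, h1⟩

end Tri

end SerreAux

/-- **Theorem 6.5 (= Theorem 1.5).** Let `C` be a Krull–Schmidt, Hom-finite, `k`-linear
triangulated category. If `C` has a cluster tilting object, then `C` has a Serre
functor: a `k`-linear autoequivalence `S : C ⥤ C` together with `k`-linear isomorphisms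
`Hom(A, B) ≃ Hom(B, S A)*`, natural in both `A` and `B`. -/
theorem heart_stmt_13 [∀ X Y : C, FiniteDimensional k (X ⟶ Y)]
    (hKS : KrullSchmidt C) (T : C) (hT : ClusterTilting C T) :
    ∃ S : C ⥤ C, S.IsEquivalence ∧
      (∀ {A B : C} (f g : A ⟶ B), S.map (f + g) = S.map f + S.map g) ∧
      (∀ {A B : C} (r : k) (f : A ⟶ B), S.map (r • f) = r • S.map f) ∧
      ∃ η : ∀ A B : C, (A ⟶ B) ≃ₗ[k] Module.Dual k (B ⟶ S.obj A),
        (∀ (A B B' : C) (f : A ⟶ B) (g : B ⟶ B') (φ : B' ⟶ S.obj A),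
          η A B' (f ≫ g) φ = η A B f (g ≫ φ)) ∧
        (∀ (A' A B : C) (a : A' ⟶ A) (f : A ⟶ B) (φ : B ⟶ S.obj A'),
          η A' B (a ≫ f) φ = η A B f (φ ≫ S.map a)) := by

  have hsplit : ∀ (X : C) (e : X ⟶ X), e ≫ e = e →
      ∃ (Y : C) (i : Y ⟶ X) (p : X ⟶ Y), i ≫ p = 𝟙 Y ∧ p ≫ i = e := fun X e he => by
    obtain ⟨n, f, α, hf⟩ := hKS X
    obtain ⟨Y, _, i, p, _, _, h1, h2, _⟩ :=
      (SerreAux.Sp.biproduct n f hf).of_iso α e he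
    exact ⟨Y, i, p, h1, h2⟩
  refine SerreAux.serre (K := k) (D := C)
    (SerreAux.representable (fun X Y f => ?_) T _ (SerreAux.res k hT) hsplit)
    (SerreAux.corepresentable (fun Y Z g => ?_) T _ (SerreAux.cores k hT) hsplit)
  · obtain ⟨Z, g, h, hΔ⟩ := distinguished_cocone_triangle f
    exact ⟨Z, g, SerreAux.Ex.of_tri _ hΔ⟩
  · obtain ⟨Z, f, h, hΔ⟩ := distinguished_cocone_triangle₁ g
    exact ⟨Z, f, SerreAux.Ex.of_tri _ hΔ⟩
end

section
/- Let k be a field and C a Krull–Schmidt, Hom-finite, k-linear triangulated category with a cluster tilting object T; write T = add T. Let X and Z be indecomposable objects of C. (a-1) If X ∉ T and X ∉ T[1], then X admits an almost split triangle X → Y' → Z' → X[1] with Y' ∉ T and Z' ∉ T. (a-2) If X ∈ T[1], then X admits an almost split triangle X → Y' → Z' → X[1] with Z' ∈ T. (b-1) If Z ∉ T and Z ∉ T[−1], then Z admits an almost split triangle X'' → Y'' → Z → X''[1] with Y'' ∉ T and X'' ∉ T. (b-2) If Z ∈ T[−1], then Z admits an almost split triangle X'' → Y'' → Z → X''[1]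 with X'' ∈ T. -/
open CategoryTheory CategoryTheory.Limits CategoryTheory.Pretriangulated

universe v u

variable (k : Type*) [Field k]
variable (C : Type u) [Category.{v} C] [Preadditive C] [HasZeroObject C] [HasShift C ℤ]
  [∀ n : ℤ, (shiftFunctor C n).Additive] [Pretriangulated C]
  [HasFiniteBiproducts C] [Linear k C]

namespace ARCore

/-- A pair of maps each of which is a weak (co)kernel of the other. -/
def Ex {D : Type*} [Category D] [Preadditive D] {A B E : D} (f : A ⟶ B) (g : B ⟶ E) : Prop :=
  f ≫ g = 0 ∧ (∀ ⦃V : D⦄ (h : V ⟶ B), h ≫ g = 0 → ∃ l, l ≫ f = h) ∧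
    (∀ ⦃V : D⦄ (h : B ⟶ V), f ≫ h = 0 → ∃ l, g ≫ l = h)

/-- Finite sum version of `add`. -/
def AddSum {D : Type*} [Category D] [Preadditive D] (G P : D) : Prop :=
  ∃ (n : ℕ) (i : Fin n → (P ⟶ G)) (p : Fin n → (G ⟶ P)), ∑ j, i j ≫ p j = 𝟙 P

section

variable {D : Type*} [Category D] [Preadditive D]

section

variable {K : Type*} [Field K] [Linear K D]

/-- `f` pulls `φ` back to zero. -/
def Kills {Z V : D} (φ : (Z ⟶ V) →ₗ[K] K) {W : D} (f : W ⟶ V) : Prop :=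
  ∀ g : Z ⟶ W, φ (g ≫ f) = 0

lemma extend {Z A B E : D} {f : A ⟶ B} {g : B ⟶ E} (h : Ex f g) (φ : (Z ⟶ B) →ₗ[K] K)
    (hφ : Kills φ f) : ∃ ψ : (Z ⟶ E) →ₗ[K] K, ∀ z, ψ (z ≫ g) = φ z := by
  let L : (Z ⟶ B) →ₗ[K] (Z ⟶ E) := Linear.rightComp K Z g
  have : φ ∈ LinearMap.range L.dualMap := by
    rw [LinearMap.range_dualMap_eq_dualAnnihilator_ker, Submodule.mem_dualAnnihilator]
    intro w hw
    obtain ⟨l, rfl⟩ := h.2.1 w hw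
    exact hφ l
  obtain ⟨ψ, hψ⟩ := this
  exact ⟨ψ, fun z => by rw [← hψ]; rfl⟩

variable [HasFiniteBiproducts D] [∀ X Y : D, FiniteDimensional K (X ⟶ Y)]

lemma cover {Z V : D} (φ : (Z ⟶ V) →ₗ[K] K) (G : D) :
    ∃ (B : D) (q : B ⟶ V), AddSum G B ∧ Kills φ q ∧
      ∀ ⦃P : D⦄, AddSum G P → ∀ f : P ⟶ V, Kills φ f → ∃ l, l ≫ q = f := by
  let N : Submodule K (G ⟶ V) :=
    { carrier := {f | Kills φ f}
      add_mem' := fun {a b} ha hb g => by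
        rw [Preadditive.comp_add, map_add, ha g, hb g, add_zero]
      zero_mem' := fun g => by rw [comp_zero, map_zero]
      smul_mem' := fun c a ha g => by
        rw [Linear.comp_smul, map_smul, ha g, smul_zero] }
  let b := Module.finBasis K N
  let q : (⨁ fun _ : Fin (Module.finrank K N) => G) ⟶ V := biproduct.desc fun j => (b j : G ⟶ V)
  have hG : ∀ f : G ⟶ V, Kills φ f → ∃ l, l ≫ q = f := by
    intro f hf
    refine ⟨∑ j, b.repr ⟨f, hf⟩ j • biproduct.ι (fun _ : Fin (Module.finrank K N) => G) j, ?_⟩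
    have := congrArg Subtype.val (b.sum_repr ⟨f, hf⟩)
    rw [Preadditive.sum_comp]
    simp only [Linear.smul_comp, q, biproduct.ι_desc]
    rw [AddSubmonoidClass.coe_finsetSum] at this
    exact this
  refine ⟨_, q, ⟨Module.finrank K N, biproduct.π _, biproduct.ι _, biproduct.total⟩, ?_, ?_⟩
  · intro g
    have : q = ∑ j, biproduct.π _ j ≫ (b j : G ⟶ V) := by
      exact biproduct.desc_eq
    rw [this, Preadditive.comp_sum, map_sum]
    refine Finset.sum_eq_zero fun j _ => ?_
    rw [← Category.assoc]
    exact (b j).2 _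
  · rintro P ⟨n, i, p, hip⟩ f hf
    have : ∀ j, ∃ l, l ≫ q = p j ≫ f := fun j => hG _ fun g => by
      rw [← Category.assoc]; exact hf _
    choose l hl using this
    refine ⟨∑ j, i j ≫ l j, ?_⟩
    rw [Preadditive.sum_comp]
    simp only [Category.assoc, hl]
    simp only [← Category.assoc]
    rw [← Preadditive.sum_comp, hip, Category.id_comp]

lemma enlarge [HasBinaryBiproducts D] {Z V : D} (φ : (Z ⟶ V) →ₗ[K] K) (G : D) :
    ∃ (V' : D) (s : V ⟶ V') (φ' : (Z ⟶ V') →ₗ[K] K), (∀ z, φ' (z ≫ s) = φ z) ∧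
      ∀ ⦃Q : D⦄, AddSum G Q → ∀ θ : (Z ⟶ Q) →ₗ[K] K, ∃ a : Q ⟶ V', ∀ z, φ' (z ≫ a) = θ z := by
  obtain ⟨n, ⟨b⟩⟩ : ∃ n, Nonempty (Module.Basis (Fin n) K ((Z ⟶ G) →ₗ[K] K)) :=
    ⟨_, ⟨Module.finBasis K _⟩⟩
  let φ' : (Z ⟶ V ⊞ (⨁ fun _ : Fin n => G)) →ₗ[K] K := φ ∘ₗ Linear.rightComp K Z biprod.fst +
    ∑ j, b j ∘ₗ Linear.rightComp K Z (biprod.snd ≫ biproduct.π (fun _ : Fin n => G) j)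
  have hφ' : ∀ z, φ' z = φ (z ≫ biprod.fst) +
      ∑ j, b j (z ≫ biprod.snd ≫ biproduct.π (fun _ : Fin n => G) j) := by
    intro z
    simp [φ', LinearMap.sum_apply]
  have hG : ∀ θ : (Z ⟶ G) →ₗ[K] K, ∃ a : G ⟶ V ⊞ (⨁ fun _ : Fin n => G), ∀ z, φ' (z ≫ a) = θ z := by
    intro θ
    refine ⟨biproduct.lift (fun j => b.repr θ j • 𝟙 G) ≫ biprod.inr, fun z => ?_⟩
    rw [hφ']
    have := LinearMap.congr_fun (b.sum_repr θ) z
    rw [← this, LinearMap.sum_apply]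
    simp
  refine ⟨V ⊞ (⨁ fun _ : Fin n => G), biprod.inl, φ', fun z => by rw [hφ']; simp, ?_⟩
  rintro Q ⟨m, i, p, hip⟩ θ
  choose a ha using fun j => hG (θ ∘ₗ Linear.rightComp K Z (p j))
  refine ⟨∑ j, i j ≫ a j, fun z => ?_⟩
  rw [Preadditive.comp_sum, map_sum]
  simp only [← Category.assoc, ha]
  conv_rhs => rw [← Category.comp_id z, ← hip, Preadditive.comp_sum, map_sum]
  simp

/-- Every kernel `Hom(-,V) → D Hom(Z,-)` is finitely generated. -/
lemma kernel_fg [HasBinaryBiproducts D] (hc : ∀ ⦃A B : D⦄ (f : A ⟶ B), ∃ (E : D) (g : B ⟶ E), Ex f g)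
    (hk : ∀ ⦃B E : D⦄ (g : B ⟶ E), ∃ (A : D) (f : A ⟶ B), Ex f g)
    (G₁ G₂ : D) (h5 : ∀ W : D, ∃ (P Q R : D) (a : P ⟶ W) (b : W ⟶ Q) (c : Q ⟶ R),
      Ex a b ∧ Ex b c ∧ AddSum G₁ P ∧ AddSum G₂ Q ∧ AddSum G₂ R)
    {Z V : D} (φ : (Z ⟶ V) →ₗ[K] K) :
    ∃ (Y : D) (y : Y ⟶ V), ∀ ⦃W : D⦄ (f : W ⟶ V), (∃ l, l ≫ y = f) ↔ Kills φ f := by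
  obtain ⟨V', s, φ', hs, hθ⟩ := enlarge φ G₂
  suffices H : ∃ (Y : D) (y : Y ⟶ V'), ∀ ⦃W : D⦄ (f : W ⟶ V'), (∃ l, l ≫ y = f) ↔ Kills φ' f by
    obtain ⟨Y, y, hy⟩ := H
    obtain ⟨S, t, hyt⟩ := hc y
    obtain ⟨Y₂, y₂, hy₂⟩ := hk (s ≫ t)
    refine ⟨Y₂, y₂, fun W f => ?_⟩
    have h1 : Kills φ f ↔ Kills φ' (f ≫ s) := by
      simp only [Kills, ← Category.assoc, hs]
    rw [h1, ← hy]
    constructor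
    · rintro ⟨l, rfl⟩
      exact hyt.2.1 _ (by simp only [Category.assoc, hy₂.1, comp_zero])
    · rintro ⟨l, hl⟩
      exact hy₂.2.1 _ (by rw [← Category.assoc, ← hl, Category.assoc, hyt.1, comp_zero])
  obtain ⟨Y₀, y₀, -, hy₀, hP⟩ := cover φ' G₁
  obtain ⟨U, u, hu⟩ := hc y₀
  obtain ⟨ψ, hψ⟩ := extend hu φ' hy₀
  obtain ⟨B, q, -, hq, hQ⟩ := cover ψ G₂
  obtain ⟨Y, r, hr⟩ := hk (biprod.desc u (-q))
  refine ⟨Y, r ≫ biprod.fst, fun W f => ⟨?_, ?_⟩⟩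
  · rintro ⟨l, rfl⟩ g
    have h0 : r ≫ biprod.fst ≫ u = r ≫ biprod.snd ≫ q := by
      have := hr.1
      rw [biprod.desc_eq, Preadditive.comp_add] at this
      simpa [add_neg_eq_zero] using this
    rw [← hψ]
    simp only [Category.assoc, h0]
    have := hq (g ≫ l ≫ r ≫ biprod.snd)
    simpa only [Category.assoc] using this
  · intro hf
    obtain ⟨P, Q, R, a, b, c, hab, hbc, aP, aQ, aR⟩ := h5 W
    obtain ⟨l₀, hl₀⟩ := hP aP (a ≫ f) (fun g => by rw [← Category.assoc]; exact hf _)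
    obtain ⟨d, hd⟩ := hab.2.2 (f ≫ u) (by
      rw [← Category.assoc, ← hl₀, Category.assoc, hu.1, comp_zero])
    obtain ⟨θ, hθ'⟩ := extend hbc (ψ ∘ₗ Linear.rightComp K Z d) (fun g => by
      have : ψ (g ≫ f ≫ u) = 0 := by rw [← Category.assoc, hψ]; exact hf g
      simpa [hd] using this)
    obtain ⟨a', ha'⟩ := hθ aR θ
    obtain ⟨e, he⟩ := hQ aQ (d - c ≫ a' ≫ u) (fun g => by
      have h1 : ψ (g ≫ c ≫ a' ≫ u) = ψ (g ≫ d) := by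
        have := hψ (g ≫ c ≫ a')
        simp only [Category.assoc] at this
        rw [this]
        have h2 := ha' (g ≫ c)
        simp only [Category.assoc] at h2
        rw [h2, hθ']; rfl
      rw [Preadditive.comp_sub, map_sub, h1, sub_self])
    obtain ⟨m, hm⟩ := hr.2.1 (biprod.lift f (b ≫ e)) (by
      have : b ≫ e ≫ q = f ≫ u := by
        rw [he, Preadditive.comp_sub, hd, ← Category.assoc b c, hbc.1, zero_comp, sub_zero]
      simp [this])
    exact ⟨m, by rw [← Category.assoc, hm, biprod.lift_fst]⟩

end

variable [HasFiniteBiproducts D] [HasBinaryBiproducts D]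

/-- Existence of right almost split maps. -/
lemma exists_ras (K : Type*) [Field K] [Linear K D] [∀ X Y : D, FiniteDimensional K (X ⟶ Y)]
    (hc : ∀ ⦃A B : D⦄ (f : A ⟶ B), ∃ (E : D) (g : B ⟶ E), Ex f g)
    (hk : ∀ ⦃B E : D⦄ (g : B ⟶ E), ∃ (A : D) (f : A ⟶ B), Ex f g)
    (G₁ G₂ : D) (h5 : ∀ W : D, ∃ (P Q R : D) (a : P ⟶ W) (b : W ⟶ Q) (c : Q ⟶ R),
      Ex a b ∧ Ex b c ∧ AddSum G₁ P ∧ AddSum G₂ Q ∧ AddSum G₂ R)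
    (Z : D) (hZ : IsLocalRing (End Z)) :
    ∃ (Y : D) (y : Y ⟶ Z), ∀ ⦃W : D⦄ (f : W ⟶ Z),
      (∃ l, l ≫ y = f) ↔ ¬ ∃ s, s ≫ f = 𝟙 Z := by
  let N : Submodule K (End Z) :=
    { carrier := {f | ¬ IsUnit f}
      add_mem' := fun {a b} ha hb => IsLocalRing.nonunits_add ha hb
      zero_mem' := not_isUnit_zero
      smul_mem' := fun c a ha hca => ha (by
        have hc0 : c ≠ 0 := by
          rintro rfl
          rw [zero_smul] at hca
          exact not_isUnit_zero hca
        exact (isUnit_smul_iff (Units.mk0 c hc0) a).1 hca) }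
  obtain ⟨φ, h1, hφ⟩ := Submodule.exists_le_ker_of_notMem (p := N) (v := (1 : End Z))
    (fun h => h isUnit_one)
  obtain ⟨Y, y, hy⟩ := kernel_fg hc hk G₁ G₂ h5 (Z := Z) (V := Z) φ
  refine ⟨Y, y, fun W f => (hy f).trans ⟨?_, ?_⟩⟩
  · rintro h ⟨s, hs⟩
    have := h s
    rw [hs] at this
    exact h1 this
  · intro h g
    refine hφ (fun hu : IsUnit (show End Z from g ≫ f) => h ?_)
    obtain ⟨v, hv⟩ := hu.exists_left_inv
    obtain ⟨w, hw⟩ := hu.exists_right_inv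
    exact ⟨(show Z ⟶ Z from w) ≫ g, by rw [Category.assoc]; exact hw⟩

end

end ARCore
namespace ARCore

section

variable {D : Type*} [Category D] [Preadditive D]

/-- The opposite of a linear category is linear. -/
@[reducible] noncomputable def linearOp (K : Type*) [Field K] [Linear K D] : Linear K Dᵒᵖ where
  homModule X Y := Equiv.module K (opEquiv X Y)
  smul_comp _ _ _ r f g := Quiver.Hom.unop_inj (Linear.comp_smul _ _ _ g.unop r f.unop)
  comp_smul _ _ _ f r g := Quiver.Hom.unop_inj (Linear.smul_comp _ _ _ r g.unop f.unop)

lemma finiteOp (K : Type*) [Field K] [Linear K D] [∀ X Y : D, FiniteDimensional K (X ⟶ Y)]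
    (X Y : Dᵒᵖ) : letI := linearOp (D := D) K; FiniteDimensional K (X ⟶ Y) := by
  let _ := linearOp (D := D) K
  let e : (Y.unop ⟶ X.unop) ≃ₗ[K] (X ⟶ Y) :=
    { toFun := fun f => f.op
      invFun := fun f => f.unop
      left_inv := fun _ => rfl
      right_inv := fun _ => rfl
      map_add' := fun _ _ => rfl
      map_smul' := fun _ _ => rfl }
  exact Module.Finite.equiv e

lemma Ex.op {A B E : D} {f : A ⟶ B} {g : B ⟶ E} (h : Ex f g) : Ex g.op f.op := by
  refine ⟨by rw [← op_comp, h.1, op_zero], fun V t ht => ?_, fun V t ht => ?_⟩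
  · obtain ⟨l, hl⟩ := h.2.2 t.unop (Quiver.Hom.op_inj ht)
    exact ⟨l.op, Quiver.Hom.unop_inj hl⟩
  · obtain ⟨l, hl⟩ := h.2.1 t.unop (Quiver.Hom.op_inj ht)
    exact ⟨l.op, Quiver.Hom.unop_inj hl⟩

lemma AddSum.op {G P : D} (h : AddSum G P) : AddSum (Opposite.op G) (Opposite.op P) := by
  obtain ⟨n, i, p, h⟩ := h
  refine ⟨n, fun j => (p j).op, fun j => (i j).op, ?_⟩
  simp only [← op_comp]
  rw [← op_sum, h, op_id]

variable [HasFiniteBiproducts D]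

lemma exists_las (K : Type*) [Field K] [Linear K D] [∀ X Y : D, FiniteDimensional K (X ⟶ Y)]
    (hc : ∀ ⦃A B : D⦄ (f : A ⟶ B), ∃ (E : D) (g : B ⟶ E), Ex f g)
    (hk : ∀ ⦃B E : D⦄ (g : B ⟶ E), ∃ (A : D) (f : A ⟶ B), Ex f g)
    (G₁ G₂ : D) (h5 : ∀ W : D, ∃ (R Q P : D) (c : R ⟶ Q) (b : Q ⟶ W) (a : W ⟶ P),
      Ex c b ∧ Ex b a ∧ AddSum G₁ P ∧ AddSum G₂ Q ∧ AddSum G₂ R)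
    (X : D) (hX : IsLocalRing (End X)) :
    ∃ (Y : D) (x : X ⟶ Y), ∀ ⦃W : D⦄ (f : X ⟶ W),
      (∃ l, x ≫ l = f) ↔ ¬ ∃ s, f ≫ s = 𝟙 X := by
  let _ := linearOp (D := D) K
  have := finiteOp (D := D) K
  have : HasFiniteProducts D := inferInstance
  have : HasFiniteProducts Dᵒᵖ := inferInstance
  have : HasFiniteBiproducts Dᵒᵖ := HasFiniteBiproducts.of_hasFiniteProducts
  have : HasBinaryBiproducts Dᵒᵖ := hasBinaryBiproducts_of_finite_biproducts _
  have hX' : IsLocalRing (End (Opposite.op X)) := by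
    let e : End (Opposite.op X) ≃+* (End X)ᵐᵒᵖ :=
      { toFun := fun f => MulOpposite.op f.unop
        invFun := fun f => f.unop.op
        left_inv := fun _ => rfl
        right_inv := fun _ => rfl
        map_add' := fun _ _ => rfl
        map_mul' := fun _ _ => rfl }
    have : Nontrivial (End (Opposite.op X)) := e.symm.injective.nontrivial
    refine IsLocalRing.of_isUnit_or_isUnit_of_isUnit_add ?_
    intro a b hab
    have h2 : IsUnit ((e a).unop + (e b).unop) := (hab.map e).unop
    rcases IsLocalRing.isUnit_or_isUnit_of_isUnit_add h2 with h | h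
    · exact Or.inl ((MulEquiv.isUnit_map e).1 h.op)
    · exact Or.inr ((MulEquiv.isUnit_map e).1 h.op)
  obtain ⟨Y, y, hy⟩ := exists_ras (D := Dᵒᵖ) K
    (fun A B f => by
      obtain ⟨A', g, h⟩ := hk f.unop
      exact ⟨_, _, h.op⟩)
    (fun A B f => by
      obtain ⟨A', g, h⟩ := hc f.unop
      exact ⟨_, _, h.op⟩) (Opposite.op G₁) (Opposite.op G₂) (fun W => by
      obtain ⟨R, Q, P, c, b, a, h1, h2, h3, h4, h5⟩ := h5 W.unop
      exact ⟨_, _, _, a.op, b.op, c.op, h2.op, h1.op, h3.op, h4.op, h5.op⟩) (Opposite.op X) hX'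
  refine ⟨Y.unop, y.unop, fun W f => ?_⟩
  have := hy f.op
  constructor
  · rintro ⟨l, hl⟩ ⟨s, hs⟩
    exact this.1 ⟨l.op, Quiver.Hom.unop_inj hl⟩ ⟨s.op, Quiver.Hom.unop_inj hs⟩
  · intro h
    obtain ⟨l, hl⟩ := this.2 (fun ⟨s, hs⟩ => h ⟨s.unop, Quiver.Hom.op_inj hs⟩)
    exact ⟨l.unop, Quiver.Hom.op_inj hl⟩

end

end ARCore
namespace ARCore

section

set_option linter.unusedSectionVars false

variable {C}

lemma ex₁ {A B E : C} {f : A ⟶ B} {g : B ⟶ E} {h : E ⟶ A⟦(1 : ℤ)⟧}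
    (H : Triangle.mk f g h ∈ distTriang C) : Ex f g := by
  refine ⟨comp_distTriang_mor_zero₁₂ _ H, fun V t ht => ?_, fun V t ht => ?_⟩
  · obtain ⟨l, hl⟩ := Triangle.coyoneda_exact₂ _ H t ht
    exact ⟨l, hl.symm⟩
  · obtain ⟨l, hl⟩ := Triangle.yoneda_exact₂ _ H t ht
    exact ⟨l, hl.symm⟩

lemma ex₂ {A B E : C} {f : A ⟶ B} {g : B ⟶ E} {h : E ⟶ A⟦(1 : ℤ)⟧}
    (H : Triangle.mk f g h ∈ distTriang C) : Ex g h :=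
  ex₁ (rot_of_distTriang _ H)

lemma ex₃ {A B E : C} {f : A ⟶ B} {g : B ⟶ E} {h : E ⟶ A⟦(1 : ℤ)⟧}
    (H : Triangle.mk f g h ∈ distTriang C) : Ex h (f⟦(1 : ℤ)⟧') := by
  have h1 : Ex h (-f⟦(1 : ℤ)⟧') := ex₂ (rot_of_distTriang _ H)
  refine ⟨by simpa using h1.1, fun V t ht => h1.2.1 t (by simpa using ht), fun V t ht => ?_⟩
  obtain ⟨l, hl⟩ := h1.2.2 t ht
  exact ⟨-l, by simpa using hl⟩

lemma factor {A B E : C} {f : A ⟶ B} {g : B ⟶ E} {h : E ⟶ A⟦(1 : ℤ)⟧}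
    (H : Triangle.mk f g h ∈ distTriang C) {M : C} (a : A ⟶ M) (ha : h ≫ a⟦(1 : ℤ)⟧' = 0) :
    ∃ m : B ⟶ M, f ≫ m = a := by
  obtain ⟨l, hl⟩ := (ex₃ H).2.2 _ ha
  obtain ⟨m, rfl⟩ := (shiftFunctor C (1 : ℤ)).map_surjective l
  exact ⟨m, (shiftFunctor C (1 : ℤ)).map_injective (by rw [Functor.map_comp, hl])⟩

lemma hc : ∀ ⦃A B : C⦄ (f : A ⟶ B), ∃ (E : C) (g : B ⟶ E), Ex f g := by
  intro A B f
  obtain ⟨E, g, h, H⟩ := distinguished_cocone_triangle f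
  exact ⟨E, g, ex₁ H⟩

lemma hk : ∀ ⦃B E : C⦄ (g : B ⟶ E), ∃ (A : C) (f : A ⟶ B), Ex f g := by
  intro B E g
  obtain ⟨A, f, h, H⟩ := distinguished_cocone_triangle₁ g
  exact ⟨A, f, ex₁ H⟩

lemma mem_addSet_iff {T P : C} : P ∈ addSet C T ↔ AddSum T P := by
  constructor
  · rintro ⟨n, i, p, h⟩
    refine ⟨n, fun j => i ≫ biproduct.π _ j, fun j => biproduct.ι (fun _ : Fin n => T) j ≫ p, ?_⟩
    calc _ = i ≫ (∑ j, biproduct.π (fun _ : Fin n => T) j ≫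
        biproduct.ι (fun _ : Fin n => T) j) ≫ p := by
          simp only [Preadditive.comp_sum, Preadditive.sum_comp, Category.assoc]
      _ = 𝟙 P := by rw [biproduct.total, Category.id_comp, h]
  · rintro ⟨n, i, p, h⟩
    exact ⟨n, biproduct.lift i, biproduct.desc p, by rw [biproduct.lift_desc, h]⟩

lemma AddSum.shift {T P : C} (h : AddSum T P) : AddSum (T⟦(1 : ℤ)⟧) (P⟦(1 : ℤ)⟧) := by
  obtain ⟨n, i, p, h⟩ := h
  refine ⟨n, fun j => (i j)⟦1⟧', fun j => (p j)⟦1⟧', ?_⟩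
  simp only [← Functor.map_comp]
  rw [← Functor.map_sum, h, CategoryTheory.Functor.map_id]

lemma AddSum.retract {T P Q : C} (h : AddSum T P) (s : Q ⟶ P) (r : P ⟶ Q) (hsr : s ≫ r = 𝟙 Q) :
    AddSum T Q := by
  obtain ⟨n, i, p, h⟩ := h
  refine ⟨n, fun j => s ≫ i j, fun j => p j ≫ r, ?_⟩
  calc _ = s ≫ (∑ j, i j ≫ p j) ≫ r := by
        simp only [Preadditive.comp_sum, Preadditive.sum_comp, Category.assoc]
    _ = 𝟙 Q := by rw [h, Category.id_comp, hsr]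

lemma AddSum.self (T : C) : AddSum T T := ⟨1, fun _ => 𝟙 T, fun _ => 𝟙 T, by simp⟩

lemma ct₁ {T : C} (hT : ClusterTilting C T) {P Q : C} (hP : P ∈ addSet C T) (hQ : Q ∈ addSet C T)
    (f : P ⟶ Q⟦(1 : ℤ)⟧) : f = 0 := by
  obtain ⟨n, i, p, h⟩ := mem_addSet_iff.1 hP
  rw [← Category.id_comp f, ← h, Preadditive.sum_comp]
  refine Finset.sum_eq_zero fun j _ => ?_
  rw [Category.assoc, (hT Q).1.1 hQ (p j ≫ f), comp_zero]

lemma self_mem (T : C) : T ∈ addSet C T := mem_addSet_iff.2 (AddSum.self T)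

lemma five (k : Type*) [Field k] [Linear k C] [∀ X Y : C, FiniteDimensional k (X ⟶ Y)] {T : C}
    (hT : ClusterTilting C T) (W : C) :
    ∃ (P₁ P₀ : C) (f : P₁ ⟶ P₀) (g : P₀ ⟶ W) (h : W ⟶ P₁⟦(1 : ℤ)⟧),
      Triangle.mk f g h ∈ distTriang C ∧ AddSum T P₁ ∧ AddSum T P₀ := by
  obtain ⟨P₀, g, hP₀, -, hg⟩ := cover (K := k) (Z := T) (V := W) 0 T
  obtain ⟨P₁, f, h, H⟩ := distinguished_cocone_triangle₁ g
  refine ⟨P₁, P₀, f, g, h, H, ?_, hP₀⟩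
  rw [← mem_addSet_iff, (hT P₁).1]
  intro t
  obtain ⟨l, rfl⟩ := (ex₃ H).2.1 t (ct₁ hT (self_mem T) (mem_addSet_iff.2 hP₀) _)
  obtain ⟨m, rfl⟩ := hg (AddSum.self T) l (fun _ => rfl)
  rw [Category.assoc, (ex₂ H).1, comp_zero]

lemma local_of_iso {X Y : C} (e : X ≅ Y) (h : IsLocalRing (End Y)) : IsLocalRing (End X) := by
  let φ := e.conj
  have hadd : ∀ a b : End X, φ (a + b) = φ a + φ b := fun a b => by
    change e.inv ≫ (show X ⟶ X from a + b) ≫ e.hom = e.inv ≫ a ≫ e.hom + e.inv ≫ b ≫ e.hom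
    rw [← Preadditive.comp_add, ← Preadditive.add_comp]
  have : Nontrivial (End X) := φ.symm.injective.nontrivial
  refine IsLocalRing.of_isUnit_or_isUnit_of_isUnit_add ?_
  intro a b hab
  have h2 : IsUnit (φ a + φ b) := by rw [← hadd]; exact hab.map φ
  rcases IsLocalRing.isUnit_or_isUnit_of_isUnit_add h2 with h | h
  · exact Or.inl ((MulEquiv.isUnit_map φ).1 h)
  · exact Or.inr ((MulEquiv.isUnit_map φ).1 h)

lemma local_of_indec (hKS : KrullSchmidt C) {X : C} (hX : Indecomposable C X) :
    IsLocalRing (End X) := by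
  obtain ⟨n, f, e, hf⟩ := hKS X
  have hn : 0 < n := by
    rcases Nat.eq_zero_or_pos n with rfl | h
    · exfalso
      apply hX.1
      rw [IsZero.iff_id_eq_zero, ← e.hom_inv_id, ← Category.id_comp e.inv, ← biproduct.total]
      simp
    · exact h
  let i : Fin n := ⟨0, hn⟩
  have hsr : (biproduct.ι f i ≫ e.inv) ≫ (e.hom ≫ biproduct.π f i) = 𝟙 _ := by simp
  have hmono : Mono (biproduct.ι f i ≫ e.inv) := inferInstance
  obtain ⟨W, g, w, H⟩ := distinguished_cocone_triangle (biproduct.ι f i ≫ e.inv)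
  have hw : w = 0 := Triangle.mor₃_eq_zero_of_mono₁ _ H hmono
  obtain ⟨e', -⟩ := exists_iso_binaryBiproduct_of_distTriang _ H hw
  have hnt := hf i
  rcases hX.2 (f i) W e' with h | h
  · exfalso
    have : (1 : End (f i)) = 0 := h.eq_of_src _ _
    exact one_ne_zero this
  · have : IsIso (biproduct.ι f i ≫ e.inv) := (Triangle.isZero₃_iff_isIso₁ _ H).1 h
    exact local_of_iso (asIso (biproduct.ι f i ≫ e.inv)).symm hnt

lemma ar_fact₁ {X Y Z : C} {x : X ⟶ Y} {y : Y ⟶ Z} {δ : Z ⟶ X⟦(1 : ℤ)⟧}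
    (H : Triangle.mk x y δ ∈ distTriang C) (hx : LeftAlmostSplit C x)
    {W : C} (h : W ⟶ X⟦(1 : ℤ)⟧) (hh : h ≠ 0) : ∃ g : Z ⟶ W, g ≫ h = δ := by
  obtain ⟨E, e, e', HE⟩ := distinguished_cocone_triangle₂ h
  obtain ⟨m, hm⟩ := hx e (by
    rintro ⟨r, hr⟩
    apply hh
    have h0 : h ≫ e⟦(1 : ℤ)⟧' = 0 := (ex₃ HE).1
    rw [← Category.comp_id h, ← CategoryTheory.Functor.map_id, ← hr, Functor.map_comp, ← Category.assoc, h0,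
      zero_comp])
  exact (ex₃ HE).2.1 δ (by
    rw [← hm, Functor.map_comp, ← Category.assoc, (ex₃ H).1, zero_comp])

lemma ar_fact₂ {X Y Z : C} {x : X ⟶ Y} {y : Y ⟶ Z} {δ : Z ⟶ X⟦(1 : ℤ)⟧}
    (H : Triangle.mk x y δ ∈ distTriang C) (hy : RightAlmostSplit C y)
    {W : C} (h : Z ⟶ W) (hh : h ≠ 0) : ∃ g : W ⟶ X⟦(1 : ℤ)⟧, h ≫ g = δ := by
  obtain ⟨E, e, hE⟩ := hk h
  obtain ⟨m, hm⟩ := hy e (by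
    rintro ⟨s, hs⟩
    apply hh
    rw [← Category.id_comp h, ← hs, Category.assoc, hE.1, comp_zero])
  exact hE.2.2 δ (by rw [← hm, Category.assoc, (ex₂ H).1, comp_zero])

/-- In a local endomorphism ring, if `1 - a` kills something nonzero then `a` is a unit. -/
lemma unit_of_local {Z : C} (hZ : IsLocalRing (End Z)) (a : Z ⟶ Z) :
    IsIso a ∨ IsIso (𝟙 Z - a) := by
  have h := IsLocalRing.isUnit_or_isUnit_of_add_one (R := End Z) (a := a) (b := (1 : End Z) - (show End Z from a))
    (add_sub_cancel _ _)
  exact h.imp (isUnit_iff_isIso a).1 (isUnit_iff_isIso (𝟙 Z - a)).1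

lemma ar_of_right {X Z : C} (hX : IsLocalRing (End X)) (δ : Z ⟶ X⟦(1 : ℤ)⟧) (hδ : δ ≠ 0)
    (h : ∀ ⦃W : C⦄ (f : W ⟶ Z), (¬ ∃ s, s ≫ f = 𝟙 Z) → f ≫ δ = 0) :
    ∃ (Y : C) (x : X ⟶ Y) (y : Y ⟶ Z), IsAlmostSplitTriangle C x y δ := by
  obtain ⟨Y, x, y, H⟩ := distinguished_cocone_triangle₂ δ
  have hy : RightAlmostSplit C y := fun W f hf => (ex₂ H).2.1 f (h f hf)
  refine ⟨Y, x, y, H, hδ, fun M a ha => ?_, hy⟩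
  by_cases h0 : δ ≫ a⟦(1 : ℤ)⟧' = 0
  · exact factor H a h0
  · exfalso
    obtain ⟨g, hg⟩ := ar_fact₂ H hy _ h0
    obtain ⟨b, hb⟩ := (shiftFunctor C (1 : ℤ)).map_surjective g
    rcases unit_of_local hX (a ≫ b) with hu | hu
    · exact ha ⟨b ≫ inv (a ≫ b), by rw [← Category.assoc, IsIso.hom_inv_id]⟩
    · apply hδ
      have h1 : δ ≫ (𝟙 X - a ≫ b)⟦(1 : ℤ)⟧' = 0 := by
        rw [Functor.map_sub, CategoryTheory.Functor.map_id, Functor.map_comp, Preadditive.comp_sub, hb,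
          Category.comp_id, ← Category.assoc, hg, sub_self]
      rw [← cancel_mono ((𝟙 X - a ≫ b)⟦(1 : ℤ)⟧'), h1, zero_comp]

lemma ar_of_left {X Z : C} (hZ : IsLocalRing (End Z)) (δ : Z ⟶ X⟦(1 : ℤ)⟧) (hδ : δ ≠ 0)
    (h : ∀ ⦃W : C⦄ (f : X ⟶ W), (¬ ∃ s, f ≫ s = 𝟙 X) → δ ≫ f⟦(1 : ℤ)⟧' = 0) :
    ∃ (Y : C) (x : X ⟶ Y) (y : Y ⟶ Z), IsAlmostSplitTriangle C x y δ := by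
  obtain ⟨Y, x, y, H⟩ := distinguished_cocone_triangle₂ δ
  have hx : LeftAlmostSplit C x := fun W f hf => factor H f (h f hf)
  refine ⟨Y, x, y, H, hδ, hx, fun N c hc => ?_⟩
  by_cases h0 : c ≫ δ = 0
  · exact (ex₂ H).2.1 c h0
  · exfalso
    obtain ⟨g, hg⟩ := ar_fact₁ H hx _ h0
    rcases unit_of_local hZ (g ≫ c) with hu | hu
    · exact hc ⟨inv (g ≫ c) ≫ g, by rw [Category.assoc, IsIso.inv_hom_id]⟩
    · apply hδ
      have h1 : (𝟙 Z - g ≫ c) ≫ δ = 0 := by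
        rw [Preadditive.sub_comp, Category.id_comp, Category.assoc, hg, sub_self]
      rw [← cancel_epi (𝟙 Z - g ≫ c), h1, comp_zero]

section

lemma exists_comp_ne (hKS : KrullSchmidt C) {Z S : C} (d : Z ⟶ S) (hd : d ≠ 0) :
    ∃ (U : C) (p : S ⟶ U), d ≫ p ≠ 0 ∧ IsLocalRing (End U) := by
  obtain ⟨n, f, e, hf⟩ := hKS S
  by_contra! hcon
  apply hd
  rw [← cancel_mono e.hom, zero_comp]
  refine biproduct.hom_ext _ _ fun j => ?_
  by_contra h
  exact hcon (f j) (e.hom ≫ biproduct.π f j) (by simpa using h) (hf j)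

lemma exists_comp_ne' (hKS : KrullSchmidt C) {Z S : C} (d : S ⟶ Z) (hd : d ≠ 0) :
    ∃ (U : C) (p : U ⟶ S), p ≫ d ≠ 0 ∧ IsLocalRing (End U) := by
  obtain ⟨n, f, e, hf⟩ := hKS S
  by_contra! hcon
  apply hd
  rw [← cancel_epi e.inv, comp_zero]
  refine biproduct.hom_ext' _ _ fun j => ?_
  by_contra h
  exact hcon (f j) (biproduct.ι f j ≫ e.inv) (by simpa using h) (hf j)

lemma exists_ar_right (k : Type*) [Field k] [Linear k C] [∀ X Y : C, FiniteDimensional k (X ⟶ Y)]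
    (hKS : KrullSchmidt C) {T : C} (hT : ClusterTilting C T) {Z : C}
    (hZ : Indecomposable C Z) :
    ∃ (X Y : C) (x : X ⟶ Y) (y : Y ⟶ Z) (δ : Z ⟶ X⟦(1 : ℤ)⟧), IsAlmostSplitTriangle C x y δ := by
  have : HasBinaryBiproducts C := hasBinaryBiproducts_of_finite_biproducts _
  obtain ⟨Y₀, y₀, hy₀⟩ := exists_ras (D := C) k hc hk T (T⟦(1 : ℤ)⟧) (fun W => by
    obtain ⟨P₁, P₀, f, g, h, H, h1, h0⟩ := five k hT W
    exact ⟨_, _, _, g, h, f⟦(1 : ℤ)⟧', ex₂ H, ex₃ H, h0, h1.shift, h0.shift⟩) Z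
    (local_of_indec hKS hZ)
  obtain ⟨S, d, hd⟩ := hc y₀
  have hd0 : d ≠ 0 := by
    rintro rfl
    obtain ⟨l, hl⟩ := hd.2.1 (𝟙 Z) comp_zero
    exact (hy₀ (𝟙 Z)).1 ⟨l, hl⟩ ⟨𝟙 Z, Category.comp_id _⟩
  obtain ⟨U, p, hp, hU⟩ := exists_comp_ne hKS d hd0
  let e : (U⟦(-1 : ℤ)⟧)⟦(1 : ℤ)⟧ ≅ U := (shiftEquiv C (1 : ℤ)).counitIso.app U
  have hX : IsLocalRing (End (U⟦(-1 : ℤ)⟧)) := by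
    have h1 := local_of_iso e hU
    let φ : End (U⟦(-1 : ℤ)⟧) →+* End ((U⟦(-1 : ℤ)⟧)⟦(1 : ℤ)⟧) :=
      { toFun := fun f => f⟦(1 : ℤ)⟧'
        map_one' := CategoryTheory.Functor.map_id _ _
        map_mul' := fun a b => Functor.map_comp _ _ _
        map_zero' := Functor.map_zero _ _ _
        map_add' := fun a b => Functor.map_add _ }
    have hφ : ∀ a, IsUnit (φ a) → IsUnit a := fun a ha => by
      rw [isUnit_iff_isIso] at ha ⊢
      have : IsIso ((shiftFunctor C (1 : ℤ)).map a) := ha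
      exact isIso_of_reflects_iso a (shiftFunctor C (1 : ℤ))
    have : Nontrivial (End (U⟦(-1 : ℤ)⟧)) := φ.domain_nontrivial
    refine IsLocalRing.of_isUnit_or_isUnit_of_isUnit_add fun a b hab => ?_
    have h2 : IsUnit (φ a + φ b) := by rw [← map_add]; exact hab.map φ
    exact (IsLocalRing.isUnit_or_isUnit_of_isUnit_add h2).imp (hφ a) (hφ b)
  obtain ⟨Y, x, y, h⟩ := ar_of_right hX (d ≫ p ≫ e.inv)
    (fun h => hp (by
      rw [← Category.assoc] at h
      rw [← cancel_mono e.inv, h, zero_comp]))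
    (fun W f hf => by
      obtain ⟨l, rfl⟩ := (hy₀ f).2 hf
      rw [Category.assoc, ← Category.assoc y₀, hd.1, zero_comp, comp_zero])
  exact ⟨_, Y, x, y, _, h⟩

lemma exists_ar_left (k : Type*) [Field k] [Linear k C] [∀ X Y : C, FiniteDimensional k (X ⟶ Y)]
    (hKS : KrullSchmidt C) {T : C} (hT : ClusterTilting C T) {X : C}
    (hX : Indecomposable C X) :
    ∃ (Y Z : C) (x : X ⟶ Y) (y : Y ⟶ Z) (δ : Z ⟶ X⟦(1 : ℤ)⟧), IsAlmostSplitTriangle C x y δ := by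
  obtain ⟨Y₀, x₀, hx₀⟩ := exists_las (D := C) k hc hk (T⟦(1 : ℤ)⟧) T (fun W => by
    obtain ⟨P₁, P₀, f, g, h, H, h1, h0⟩ := five k hT W
    exact ⟨_, _, _, f, g, h, ex₁ H, ex₂ H, h1.shift, h0, h1⟩) X
    (local_of_indec hKS hX)
  obtain ⟨S, y₀, d, H⟩ := distinguished_cocone_triangle x₀
  have hd0 : d ≠ 0 := by
    rintro rfl
    obtain ⟨l, hl⟩ := factor H (𝟙 X) zero_comp
    exact (hx₀ (𝟙 X)).1 ⟨l, hl⟩ ⟨𝟙 X, Category.comp_id _⟩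
  obtain ⟨U, p, hp, hU⟩ := exists_comp_ne' hKS d hd0
  obtain ⟨Y, x, y, h⟩ := ar_of_left hU (p ≫ d) hp
    (fun W f hf => by
      obtain ⟨l, rfl⟩ := (hx₀ f).2 hf
      rw [Functor.map_comp, Category.assoc, ← Category.assoc d, (ex₃ H).1, zero_comp, comp_zero])
  exact ⟨Y, U, x, y, _, h⟩

end

end

end ARCore
/-- **Lemma 6.2.** Let `C` be a Krull–Schmidt, Hom-finite, `k`-linear triangulated
category with a cluster tilting object `T`, and let `X`, `Z` be indecomposable.
(a-1) If `X ∉ add T` and `X ∉ (add T)[1]`, then `X` admits an almost split triangle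
`X → Y' → Z' → X[1]` with `Y' ∉ add T` and `Z' ∉ add T`.
(a-2) If `X ∈ (add T)[1]`, then `X` admits an almost split triangle
`X → Y' → Z' → X[1]` with `Z' ∈ add T`.
(b-1) If `Z ∉ add T` and `Z ∉ (add T)[-1]`, then `Z` admits an almost split triangle
`X'' → Y'' → Z → X''[1]` with `Y'' ∉ add T` and `X'' ∉ add T`.
(b-2) If `Z ∈ (add T)[-1]`, then `Z` admits an almost split triangle
`X'' → Y'' → Z → X''[1]` with `X'' ∈ add T`.
Here `X ∈ (add T)[1]` is expressed as `X⟦-1⟧ ∈ add T`, and `Z ∈ (add T)[-1]` as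
`Z⟦1⟧ ∈ add T`. -/
theorem heart_stmt_14 [∀ X Y : C, FiniteDimensional k (X ⟶ Y)]
    (hKS : KrullSchmidt C) (T : C) (hT : ClusterTilting C T)
    {X Z : C} (hX : Indecomposable C X) (hZ : Indecomposable C Z) :
    ((X ∉ addSet C T ∧ X⟦(-1 : ℤ)⟧ ∉ addSet C T) →
      ∃ (Y' Z' : C) (x : X ⟶ Y') (y : Y' ⟶ Z') (δ : Z' ⟶ X⟦(1 : ℤ)⟧),
        IsAlmostSplitTriangle C x y δ ∧ Y' ∉ addSet C T ∧ Z' ∉ addSet C T) ∧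
    (X⟦(-1 : ℤ)⟧ ∈ addSet C T →
      ∃ (Y' Z' : C) (x : X ⟶ Y') (y : Y' ⟶ Z') (δ : Z' ⟶ X⟦(1 : ℤ)⟧),
        IsAlmostSplitTriangle C x y δ ∧ Z' ∈ addSet C T) ∧
    ((Z ∉ addSet C T ∧ Z⟦(1 : ℤ)⟧ ∉ addSet C T) →
      ∃ (X'' Y'' : C) (x : X'' ⟶ Y'') (y : Y'' ⟶ Z) (δ : Z ⟶ X''⟦(1 : ℤ)⟧),
        IsAlmostSplitTriangle C x y δ ∧ Y'' ∉ addSet C T ∧ X'' ∉ addSet C T) ∧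
    (Z⟦(1 : ℤ)⟧ ∈ addSet C T →
      ∃ (X'' Y'' : C) (x : X'' ⟶ Y'') (y : Y'' ⟶ Z) (δ : Z ⟶ X''⟦(1 : ℤ)⟧),
        IsAlmostSplitTriangle C x y δ ∧ X'' ∈ addSet C T) := by
  have hiso : ∀ W : C, Nonempty (W⟦(-1 : ℤ)⟧⟦(1 : ℤ)⟧ ≅ W) := fun W =>
    ⟨(shiftEquiv C (1 : ℤ)).counitIso.app W⟩
  have hcancel : ∀ {W : C} (f : T ⟶ W⟦(-1 : ℤ)⟧⟦(1 : ℤ)⟧),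
      ∃ f' : T ⟶ W, (f = 0 ↔ f' = 0) := by
    intro W f
    obtain ⟨e⟩ := hiso W
    exact ⟨f ≫ e.hom, fun h => by rw [h, Limits.zero_comp],
      fun h => by rw [← cancel_mono e.hom, h, Limits.zero_comp]⟩
  have hcancel' : ∀ {W : C} (f : T ⟶ W),
      ∃ f' : T ⟶ W⟦(-1 : ℤ)⟧⟦(1 : ℤ)⟧, (f = 0 ↔ f' = 0) := by
    intro W f
    obtain ⟨e⟩ := hiso W
    exact ⟨f ≫ e.inv, fun h => by rw [h, Limits.zero_comp],
      fun h => by rw [← cancel_mono e.inv, h, Limits.zero_comp]⟩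
  have hTT := ARCore.self_mem T
  refine ⟨?_, ?_, ?_, ?_⟩
  · rintro ⟨h1, h2⟩
    obtain ⟨Y, W, x, y, δ, H, hδ, hx, hy⟩ := ARCore.exists_ar_left k hKS hT hX
    have hW : W ∉ addSet C T := by
      intro hW
      apply h2
      rw [(hT _).1]
      intro f
      obtain ⟨f', hf'⟩ := hcancel f
      rw [hf']
      by_contra hne
      obtain ⟨g, hg⟩ := ARCore.ar_fact₁ H hx (f'⟦(1 : ℤ)⟧') (fun h => hne
        ((shiftFunctor C (1 : ℤ)).map_injective (by rw [h, Functor.map_zero])))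
      rw [ARCore.ct₁ hT hW hTT g, zero_comp] at hg
      exact hδ hg.symm
    refine ⟨Y, W, x, y, δ, ⟨H, hδ, hx, hy⟩, ?_, hW⟩
    intro hY
    apply h1
    rw [(hT _).1]
    intro f
    obtain ⟨l, rfl⟩ := (ARCore.ex₃ H).2.1 f (ARCore.ct₁ hT hTT hY _)
    obtain ⟨m, rfl⟩ := hy l (by
      rintro ⟨s, hs⟩
      exact hW (ARCore.mem_addSet_iff.2 ((ARCore.AddSum.self T).retract s l hs)))
    rw [Category.assoc, (ARCore.ex₂ H).1, comp_zero]
  · intro h1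
    obtain ⟨Y, W, x, y, δ, H, hδ, hx, hy⟩ := ARCore.exists_ar_left k hKS hT hX
    refine ⟨Y, W, x, y, δ, ⟨H, hδ, hx, hy⟩, ?_⟩
    rw [(hT _).2]
    intro f
    by_contra hne
    obtain ⟨g, hg⟩ := ARCore.ar_fact₂ H hy f hne
    obtain ⟨g', rfl⟩ := (shiftFunctor C (1 : ℤ)).map_surjective g
    have hg' : g' = 0 := by
      obtain ⟨g'', h2⟩ := hcancel' g'
      exact h2.2 (ARCore.ct₁ hT hTT h1 g'')
    rw [hg', Functor.map_zero, comp_zero] at hg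
    exact hδ hg.symm
  · rintro ⟨h1, h2⟩
    obtain ⟨W, Y, x, y, δ, H, hδ, hx, hy⟩ := ARCore.exists_ar_right k hKS hT hZ
    have hW : W ∉ addSet C T := by
      intro hW
      apply h2
      rw [(hT _).2]
      intro f
      obtain ⟨f', rfl⟩ := (shiftFunctor C (1 : ℤ)).map_surjective f
      by_contra hne
      obtain ⟨g, hg⟩ := ARCore.ar_fact₂ H hy f' (fun h => hne (by rw [h, Functor.map_zero]))
      rw [ARCore.ct₁ hT hTT hW g, comp_zero] at hg
      exact hδ hg.symm
    refine ⟨W, Y, x, y, δ, ⟨H, hδ, hx, hy⟩, ?_, hW⟩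
    intro hY
    apply h1
    rw [(hT _).2]
    intro f
    obtain ⟨l, rfl⟩ := (ARCore.ex₂ H).2.2 f (ARCore.ct₁ hT hY hTT _)
    obtain ⟨l', rfl⟩ := (shiftFunctor C (1 : ℤ)).map_surjective l
    obtain ⟨m, rfl⟩ := hx l' (by
      rintro ⟨s, hs⟩
      exact hW (ARCore.mem_addSet_iff.2 ((ARCore.AddSum.self T).retract l' s hs)))
    rw [Functor.map_comp, ← Category.assoc, (ARCore.ex₃ H).1, zero_comp]
  · intro h1
    obtain ⟨W, Y, x, y, δ, H, hδ, hx, hy⟩ := ARCore.exists_ar_right k hKS hT hZ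
    refine ⟨W, Y, x, y, δ, ⟨H, hδ, hx, hy⟩, ?_⟩
    rw [(hT _).1]
    intro f
    by_contra hne
    obtain ⟨g, hg⟩ := ARCore.ar_fact₁ H hx f hne
    have hg' : g = 0 := (shiftFunctor C (1 : ℤ)).map_injective (by
      rw [Functor.map_zero]
      exact ARCore.ct₁ hT h1 hTT _)
    rw [hg', zero_comp] at hg
    exact hδ hg.symm
end
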